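/- arXiv:1510.05191 — 2 statements merged into one kernel-verified Lean document; each statement's English description precedes it below -/
import Mathlib

section
/- Let c ≥ 1 and d be integers with gcd(d,c) = 1, let d̅ be an integer with d·d̅ ≡ 1 (mod c), and let k be any integer. Then √(12c) · χ₁₂(k) · e(d̅(k²−1)/(24c)) · e^{πi s(d,c)} = Σ_{h ∈ {1,5,7,11}} χ₁₂(h) · e(−d(h²−1)/(24c) − hk/(12c)) · G(−6d, dh+k, c). -/
open Finset

/-- `e(x) = exp(2πix)`. -/
noncomputable def eFun (x : ℝ) : ℂ := Complex.exp (2 * (Real.pi : ℂ) * Complex.I * (x : ℂ))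

/-- The Dedekind sum `s(d,c)`. -/
noncomputable def dedekindS (d : ℤ) (c : ℕ) : ℝ :=
  ∑ r ∈ Finset.Icc 1 (c - 1),
    ((r : ℝ) / c) * ((d : ℝ) * r / c - ⌊(d : ℝ) * r / c⌋ - 1 / 2)

/-- The Kronecker symbol `(12/j)`. -/
def chi12 (j : ℤ) : ℤ :=
  if j % 12 = 1 ∨ j % 12 = 11 then 1
  else if j % 12 = 5 ∨ j % 12 = 7 then -1
  else 0

/-- The quadratic Gauss sum `G(a,b,c)`. -/
noncomputable def quadGaussSum (a b : ℤ) (c : ℕ) : ℂ :=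
  ∑ x ∈ Finset.range c, eFun (((a : ℝ) * (x : ℝ) ^ 2 + (b : ℝ) * (x : ℝ)) / c)

/-!
Up to the factor `e(d / (24c))`, the right-hand side is a Gauss sum modulo `12c` twisted by `χ₁₂`,
and the left-hand side is its closed form. Under `d ↦ d + c m` both pick up the factor `e(-m/24)`,
because `χ₁₂` is supported on `j² ≡ 1 (mod 24)`. Under `(d, c) ↦ (-c, d)` they pick up a common
factor as well: for the closed form this is Dedekind reciprocity, for the Gauss sum it is
Gauss sum reciprocity, which expresses the inversion formula of the theta function at the cusps
`a / c` and `-c / a`. The Euclidean algorithm thus reduces the identity to `c = 1`, where it is the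
Fourier expansion of `χ₁₂`.
-/

lemma eFun_add (x y : ℝ) : eFun (x + y) = eFun x * eFun y := by
  rw [eFun, eFun, eFun, ← Complex.exp_add]
  push_cast
  ring_nf

lemma eFun_intCast (n : ℤ) : eFun n = 1 :=
  Complex.exp_eq_one_iff.mpr ⟨n, by push_cast; ring⟩

lemma eFun_add_intCast (x : ℝ) (n : ℤ) : eFun (x + n) = eFun x := by
  rw [eFun_add, eFun_intCast, mul_one]

section Theta

open Complex Filter Topology

lemma tendsto_jacobiTheta₂_one {ι : Type*} {l : Filter ι} {τ : ι → ℂ} (z : ℂ)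
    (hτ : Tendsto (fun i => (τ i).im) l atTop) :
    Tendsto (fun i => jacobiTheta₂ z (τ i)) l (𝓝 1) := by
  rw [← tsum_ite_eq (0 : ℤ) (fun _ => (1 : ℂ))]
  refine tendsto_tsum_of_dominated_convergence
    (bound := fun n : ℤ => ‖jacobiTheta₂_term n z I‖)
    ((summable_jacobiTheta₂_term_iff z I).mpr (by simp)).norm (fun n => ?_) ?_
  · rcases eq_or_ne n 0 with rfl | hn
    · simpa [jacobiTheta₂_term] using tendsto_const_nhds
    · rw [if_neg hn, tendsto_zero_iff_norm_tendsto_zero]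
      simp only [norm_jacobiTheta₂_term]
      have hcoeff : -Real.pi * (n : ℝ) ^ 2 < 0 := by
        rw [neg_mul, neg_lt_zero]
        positivity
      exact Real.tendsto_exp_atBot.comp
        (tendsto_atBot_add_const_right _ _ (hτ.const_mul_atTop_of_neg hcoeff))
  · filter_upwards [hτ.eventually_ge_atTop 1] with i hi n
    simp only [norm_jacobiTheta₂_term, I_im, mul_one]
    have : 0 ≤ Real.pi * (n : ℝ) ^ 2 := by positivity
    refine Real.exp_le_exp.mpr ?_
    nlinarith

lemma exp_mul_add_sq_eq (w u : ℂ) (m : ℤ) :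
    cexp (Real.pi * I * w * (m + u) ^ 2) =
      cexp (Real.pi * I * w * u ^ 2) * jacobiTheta₂_term m (w * u) w := by
  rw [jacobiTheta₂_term, ← Complex.exp_add]
  ring_nf

lemma summable_exp_mul_add_sq {w : ℂ} (hw : 0 < w.im) (u : ℂ) :
    Summable fun m : ℤ => cexp (Real.pi * I * w * (m + u) ^ 2) := by
  simp only [exp_mul_add_sq_eq]
  exact ((summable_jacobiTheta₂_term_iff _ _).mpr hw).mul_left _

lemma jacobiTheta₂_neg_inv (u : ℂ) {w : ℂ} (hw : 0 < w.im) :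
    jacobiTheta₂ u (-1 / w) =
      (-I * w) ^ (1 / 2 : ℂ) * ∑' m : ℤ, cexp (Real.pi * I * w * (m + u) ^ 2) := by
  have hw0 : w ≠ 0 := by
    rintro rfl
    simp at hw
  have hexp : cexp (Real.pi * I * w * u ^ 2) * cexp (-Real.pi * I * (w * u) ^ 2 / w) = 1 := by
    rw [← Complex.exp_add, Complex.exp_eq_one_iff]
    exact ⟨0, by field_simp; ring⟩
  have hcpow : (-I * w) ^ (1 / 2 : ℂ) ≠ 0 := by simp [cpow_eq_zero_iff, hw0]
  simp only [exp_mul_add_sq_eq, tsum_mul_left]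
  rw [← jacobiTheta₂, jacobiTheta₂_functional_equation (w * u) w, mul_div_cancel_left₀ _ hw0]
  linear_combination (-jacobiTheta₂ u (-1 / w) * ((-I * w) ^ (1 / 2 : ℂ) *
    (1 / (-I * w) ^ (1 / 2 : ℂ)))) * hexp - jacobiTheta₂ u (-1 / w) * mul_one_div_cancel hcpow

lemma ofReal_mul_cpow {r : ℝ} (hr : 0 < r) {x : ℂ} (hx : x ≠ 0) (s : ℂ) :
    ((r : ℂ) * x) ^ s = (r : ℂ) ^ s * x ^ s := by
  have hr0 : (r : ℂ) ≠ 0 := ofReal_ne_zero.mpr hr.ne'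
  rw [cpow_def_of_ne_zero (mul_ne_zero hr0 hx), cpow_def_of_ne_zero hr0, cpow_def_of_ne_zero hx,
    log_ofReal_mul hr hx, ← Complex.exp_add, ofReal_log hr.le, add_mul]

lemma ofReal_cpow_half {r : ℝ} (hr : 0 ≤ r) : (r : ℂ) ^ (1 / 2 : ℂ) = (√r : ℂ) := by
  rw [Real.sqrt_eq_rpow, ofReal_cpow hr]
  norm_num

lemma I_mul_ofReal_cpow_half {r : ℝ} (hr : 0 < r) :
    (I * r) ^ (1 / 2 : ℂ) = √r * eFun (1 / 8) := by
  rw [mul_comm, ofReal_mul_cpow hr I_ne_zero, ofReal_cpow_half hr.le,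
    cpow_def_of_ne_zero I_ne_zero, log_I, eFun]
  congr 2
  push_cast
  ring

lemma summable_periodic_mul {N : ℕ} (hN : 0 < N) {g f : ℤ → ℂ} (hg : Function.Periodic g N)
    (hf : Summable f) : Summable fun n => g n * f n := by
  refine Summable.of_norm_bounded (hf.norm.mul_left (∑ r ∈ range N, ‖g r‖)) fun n => ?_
  have hN' : (0 : ℤ) < N := by exact_mod_cast hN
  obtain ⟨r, hr⟩ := Int.eq_ofNat_of_zero_le (Int.emod_nonneg n hN'.ne')
  have hgn : g n = g r := by
    rw [← hr, Int.emod_def, mul_comm, ← smul_eq_mul, hg.sub_zsmul_eq]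
  have hrN : r ∈ range N := by
    have := Int.emod_lt_of_pos n hN'
    simp only [mem_range]
    omega
  rw [norm_mul, hgn]
  gcongr
  exact single_le_sum (f := fun r : ℕ => ‖g r‖) (fun _ _ => norm_nonneg _) hrN

lemma tsum_eq_sum_range_tsum {N : ℕ} (hN : 0 < N) {f : ℤ → ℂ} (hf : Summable f) :
    ∑' n, f n = ∑ r ∈ range N, ∑' m : ℤ, f (m * N + r) := by
  have : NeZero N := ⟨hN.ne'⟩
  let e : Fin N × ℤ ≃ ℤ := (Equiv.prodComm _ _).trans (Int.divModEquiv N).symm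
  have hfe : Summable fun p : Fin N × ℤ => f (e p) := e.summable_iff.mpr hf
  rw [← e.tsum_eq, hfe.tsum_prod, tsum_fintype,
    ← Fin.sum_univ_eq_sum_range fun r => ∑' m : ℤ, f (m * N + r)]
  rfl

lemma sqrt_mul_tsum_periodic_mul_exp {N : ℕ} (hN : 0 < N) {g : ℤ → ℂ} (hg : Function.Periodic g N)
    {w : ℂ} (hw : 0 < w.im) (y : ℂ) :
    (-I * w) ^ (1 / 2 : ℂ) * ∑' n : ℤ, g n * cexp (Real.pi * I * w * (n + y) ^ 2) =
      1 / N * ∑ r ∈ range N, g r * jacobiTheta₂ ((r + y) / N) (-1 / (N ^ 2 * w)) := by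
  have hN0 : (N : ℂ) ≠ 0 := by exact_mod_cast hN.ne'
  have hw0 : -I * w ≠ 0 := by
    rintro h
    simp_all
  have him : 0 < ((N : ℂ) ^ 2 * w).im := by
    rw [← ofReal_natCast, ← ofReal_pow, im_ofReal_mul]
    positivity
  have hcpow : (-I * ((N : ℂ) ^ 2 * w)) ^ (1 / 2 : ℂ) = N * (-I * w) ^ (1 / 2 : ℂ) := by
    rw [show -I * ((N : ℂ) ^ 2 * w) = ((N ^ 2 : ℝ) : ℂ) * (-I * w) by push_cast; ring,
      ofReal_mul_cpow (by positivity) hw0, ofReal_cpow_half (by positivity),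
      Real.sqrt_sq (by positivity), ofReal_natCast]
  rw [tsum_eq_sum_range_tsum hN (summable_periodic_mul hN hg (summable_exp_mul_add_sq hw y)),
    mul_sum, mul_sum]
  refine sum_congr rfl fun r _ => ?_
  have hterm (m : ℤ) : g (m * N + r) * cexp (Real.pi * I * w * ((m * N + r : ℤ) + y) ^ 2) =
      g r * cexp (Real.pi * I * (N ^ 2 * w) * (m + (r + y) / N) ^ 2) := by
    rw [add_comm, ← smul_eq_mul (a := m), hg.zsmul m r, smul_eq_mul]
    congr 2
    push_cast
    field_simp
    ring
  simp only [hterm, tsum_mul_left, jacobiTheta₂_neg_inv _ him, hcpow]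
  field_simp

lemma im_pos_of_im_neg_one_div_pos {w : ℂ} (hw : 0 < (-1 / w).im) : 0 < w.im := by
  rw [neg_div, one_div, neg_im, inv_im, neg_div, neg_neg] at hw
  exact (div_pos_iff_of_pos_right (normSq_pos.mpr fun h => by simp [h] at hw)).mp hw

lemma tendsto_sqrt_mul_tsum_periodic_mul_exp {N : ℕ} (hN : 0 < N) {g : ℤ → ℂ}
    (hg : Function.Periodic g N) {ι : Type*} {l : Filter ι} {w : ι → ℂ}
    (hw : Tendsto (fun i => (-1 / w i).im) l atTop) (y : ℂ) :
    Tendsto (fun i => (-I * w i) ^ (1 / 2 : ℂ) *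
      ∑' n : ℤ, g n * cexp (Real.pi * I * w i * (n + y) ^ 2)) l
      (𝓝 (1 / N * ∑ r ∈ range N, g r)) := by
  have him : Tendsto (fun i => (-1 / ((N : ℂ) ^ 2 * w i)).im) l atTop := by
    refine (hw.const_mul_atTop (r := ((N : ℝ) ^ 2)⁻¹) (by positivity)).congr fun i => ?_
    rw [← im_ofReal_mul]
    push_cast
    ring_nf
  have hlim := (tendsto_finsetSum (range N) fun r _ =>
    (tendsto_jacobiTheta₂_one ((r + y) / N) him).const_mul (g r)).const_mul (1 / N : ℂ)
  simp only [mul_one] at hlim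
  refine hlim.congr' ?_
  filter_upwards [hw.eventually_gt_atTop 0] with i hi
  exact (sqrt_mul_tsum_periodic_mul_exp hN hg (im_pos_of_im_neg_one_div_pos hi) y).symm

/-- The Gauss sum `∑ e((a n² + b n) / (2c))` over `n` modulo `c`, which depends only on the classes
modulo `c` when `a c + b` is even; the halved arguments are the ones for which a reciprocity law
holds. -/
noncomputable def siegelSum (a b : ℤ) (c : ℕ) : ℂ :=
  ∑ n ∈ range c, eFun ((a * (n : ℝ) ^ 2 + b * n) / (2 * c))

lemma periodic_eFun_quadratic {a b : ℤ} {c : ℕ} (hc : 0 < c) (h : Even (a * c + b)) :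
    Function.Periodic (fun n : ℤ => eFun ((a * (n : ℝ) ^ 2 + b * n) / (2 * c))) c := by
  intro n
  obtain ⟨q, hq⟩ := h
  have hq' : (a : ℝ) * c + b = q + q := by exact_mod_cast hq
  beta_reduce
  rw [← eFun_add_intCast ((a * (n : ℝ) ^ 2 + b * n) / (2 * c)) (a * n + q)]
  congr 1
  push_cast
  field_simp
  linear_combination c * hq'

lemma tendsto_sqrt_mul_jacobiTheta₂_cusp {a b : ℤ} {c : ℕ} (hc : 0 < c) (h : Even (a * c + b))
    {ι : Type*} {l : Filter ι} {w : ι → ℂ} (hw : Tendsto (fun i => (-1 / w i).im) l atTop) :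
    Tendsto (fun i => (-I * w i) ^ (1 / 2 : ℂ) * jacobiTheta₂ (b / (2 * c)) (a / c + w i)) l
      (𝓝 (1 / c * siegelSum a b c)) := by
  have hc0 : (c : ℂ) ≠ 0 := by exact_mod_cast hc.ne'
  have hterm (i : ι) (n : ℤ) : jacobiTheta₂_term n (b / (2 * c)) (a / c + w i) =
      eFun ((a * (n : ℝ) ^ 2 + b * n) / (2 * c)) * cexp (Real.pi * I * w i * (n + 0) ^ 2) := by
    rw [jacobiTheta₂_term, eFun, ← Complex.exp_add]
    congr 1
    push_cast
    field_simp
    ring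
  simp only [jacobiTheta₂, hterm]
  simpa only [Int.cast_natCast] using!
    tendsto_sqrt_mul_tsum_periodic_mul_exp hc (periodic_eFun_quadratic hc h) hw 0

lemma jacobiTheta₂_eq_tsum_inversion {a c : ℕ} (ha : 0 < a) (hc : 0 < c) (b : ℤ) {τ : ℂ}
    (hτ : 0 < τ.im) :
    jacobiTheta₂ (b / (2 * c)) τ = (I / τ) ^ (1 / 2 : ℂ) * (eFun (-(b ^ 2 / (8 * a * c))) *
      ∑' n : ℤ, eFun (((-c : ℤ) * (n : ℝ) ^ 2 + (-b : ℤ) * n) / (2 * a)) *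
        cexp (Real.pi * I * (c / a - 1 / τ) * (n + b / (2 * c)) ^ 2)) := by
  have ha0 : (a : ℂ) ≠ 0 := by exact_mod_cast ha.ne'
  have hc0 : (c : ℂ) ≠ 0 := by exact_mod_cast hc.ne'
  have hτ0 : τ ≠ 0 := by
    rintro rfl
    simp at hτ
  have hτ' : -1 / (-1 / τ) = τ := by field_simp
  rw [← tsum_mul_left]
  nth_rewrite 1 [← hτ']
  rw [jacobiTheta₂_neg_inv _ (im_pos_of_im_neg_one_div_pos (by rwa [hτ'])),
    show -I * (-1 / τ) = I / τ by ring]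
  congr 2 with n
  rw [eFun, eFun, ← Complex.exp_add, ← Complex.exp_add]
  congr 1
  push_cast
  field_simp
  ring

lemma neg_one_div_sub_one_div {r w : ℂ} (hr : r ≠ 0) (hw : w ≠ 0) (hrw : r + w ≠ 0) :
    -1 / (1 / r - 1 / (r + w)) = r ^ 2 * (-1 / w) - r := by
  have : 1 / r - 1 / (r + w) = w / (r * (r + w)) := by
    field_simp
    ring
  rw [this]
  field_simp
  ring

/-- The inversion `τ ↦ -1 / τ` at `τ = a / c + iε`, written so that both sides converge as
`ε → 0⁺`: the left side near the cusp `a / c`, the right side near the cusp `-c / a`. -/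
lemma cpow_mul_jacobiTheta₂_inversion {a c : ℕ} (ha : 0 < a) (hc : 0 < c) (b : ℤ) {ε : ℝ}
    (hε : 0 < ε) {τ w : ℂ} (hτ : τ = a / c + I * ε) (hw : w = c / a - 1 / τ) :
    (c / a / τ) ^ (1 / 2 : ℂ) * ((-I * (I * ε)) ^ (1 / 2 : ℂ) * jacobiTheta₂ (b / (2 * c)) τ) =
      (I / τ) ^ (1 / 2 : ℂ) * (eFun (-(b ^ 2 / (8 * a * c))) * ((-I * w) ^ (1 / 2 : ℂ) *
        ∑' n : ℤ, eFun (((-c : ℤ) * (n : ℝ) ^ 2 + (-b : ℤ) * n) / (2 * a)) *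
          cexp (Real.pi * I * w * (n + b / (2 * c)) ^ 2))) := by
  have ha0 : (a : ℂ) ≠ 0 := by exact_mod_cast ha.ne'
  have hc0 : (c : ℂ) ≠ 0 := by exact_mod_cast hc.ne'
  have him : τ.im = ε := by
    have : ((a : ℂ) / c).im = 0 := by
      rw [← ofReal_natCast, ← ofReal_natCast, ← ofReal_div, ofReal_im]
    simp [hτ, this]
  have hτ0 : τ ≠ 0 := fun h => by simp [h, hε.ne] at him
  have hw' : -I * w = ε * (c / a / τ) := by
    have : w = c / a / τ * (I * ε) := by
      rw [hw]
      field_simp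
      rw [hτ]
      field_simp
      ring
    rw [this]
    linear_combination (-(ε * (c / a / τ)) : ℂ) * I_sq
  have hε' : -I * (I * ε) = ε := by linear_combination (-ε : ℂ) * I_sq
  rw [jacobiTheta₂_eq_tsum_inversion ha hc b (him ▸ hε), hw', hε',
    ofReal_mul_cpow hε (by positivity), hw]
  ring

lemma tendsto_im_neg_one_div_I_mul :
    Tendsto (fun ε : ℝ => (-1 / (I * ε)).im) (𝓝[>] 0) atTop := by
  refine tendsto_inv_nhdsGT_zero.congr fun ε => ?_
  rw [div_mul_eq_div_div, neg_div, one_div, inv_I, neg_neg, div_ofReal_im, I_im, one_div]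

lemma tendsto_im_neg_one_div_inversion {r : ℝ} (hr : 0 < r) :
    Tendsto (fun ε : ℝ => (-1 / (1 / r - 1 / (r + I * ε)) : ℂ).im) (𝓝[>] 0) atTop := by
  refine (tendsto_im_neg_one_div_I_mul.const_mul_atTop (r := r ^ 2) (by positivity)).congr' ?_
  filter_upwards [self_mem_nhdsWithin] with ε (hε : 0 < ε)
  have hw : I * (ε : ℂ) ≠ 0 := mul_ne_zero I_ne_zero (ofReal_ne_zero.mpr hε.ne')
  have hrw : (r + I * ε : ℂ) ≠ 0 := fun h => hr.ne' (by simpa using congrArg re h)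
  rw [neg_one_div_sub_one_div (ofReal_ne_zero.mpr hr.ne') hw hrw, sub_im, ofReal_im, sub_zero,
    ← ofReal_pow, im_ofReal_mul]

lemma tendsto_add_I_mul (z : ℂ) : Tendsto (fun ε : ℝ => z + I * ε) (𝓝[>] 0) (𝓝 z) := by
  have : Continuous fun ε : ℝ => z + I * ε := by fun_prop
  simpa using (this.tendsto 0).mono_left nhdsWithin_le_nhds

lemma tendsto_div_cpow_half {z r : ℂ} (hr : r ≠ 0) (hz : z / r ∈ slitPlane) :
    Tendsto (fun ε : ℝ => (z / (r + I * ε)) ^ (1 / 2 : ℂ)) (𝓝[>] 0) (𝓝 ((z / r) ^ (1 / 2 : ℂ))) :=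
  (tendsto_const_nhds.div (tendsto_add_I_mul r) hr).cpow tendsto_const_nhds hz

lemma tendsto_inv_div_cpow_half {r : ℝ} (hr : 0 < r) :
    Tendsto (fun ε : ℝ => ((r : ℂ)⁻¹ / (r + I * ε)) ^ (1 / 2 : ℂ)) (𝓝[>] 0) (𝓝 (r : ℂ)⁻¹) := by
  have hsq : (r : ℂ)⁻¹ / r = (r⁻¹ ^ 2 : ℝ) := by
    push_cast
    ring
  have hroot : ((r : ℂ)⁻¹ / r) ^ (1 / 2 : ℂ) = (r : ℂ)⁻¹ := by
    rw [hsq, ofReal_cpow_half (by positivity), Real.sqrt_sq (by positivity), ofReal_inv]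
  have hmem : (r : ℂ)⁻¹ / r ∈ slitPlane := by
    rw [hsq, ofReal_mem_slitPlane]
    positivity
  have hlim := tendsto_div_cpow_half (ofReal_ne_zero.mpr hr.ne') hmem
  rwa [hroot] at hlim

lemma tendsto_I_div_cpow_half {r : ℝ} (hr : 0 < r) :
    Tendsto (fun ε : ℝ => (I / (r + I * ε)) ^ (1 / 2 : ℂ)) (𝓝[>] 0)
      (𝓝 (√r⁻¹ * eFun (1 / 8))) := by
  rw [← I_mul_ofReal_cpow_half (inv_pos.mpr hr), ofReal_inv, ← div_eq_mul_inv]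
  refine tendsto_div_cpow_half (ofReal_ne_zero.mpr hr.ne') (mem_slitPlane_iff.mpr (Or.inr ?_))
  rw [div_ofReal_im, I_im]
  positivity

theorem siegelSum_reciprocity {a c : ℕ} (ha : 0 < a) (hc : 0 < c) {b : ℤ}
    (h : Even ((a : ℤ) * c + b)) :
    siegelSum a b c =
      √(c / a) * eFun (1 / 8 - b ^ 2 / (8 * a * c)) * siegelSum (-c) (-b) a := by
  have ha0 : (a : ℂ) ≠ 0 := by exact_mod_cast ha.ne'
  have hc0 : (c : ℂ) ≠ 0 := by exact_mod_cast hc.ne'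
  have hac : (0 : ℝ) < a / c := by positivity
  let τ : ℝ → ℂ := fun ε => a / c + I * ε
  have hscale : Tendsto (fun ε => (c / a / τ ε) ^ (1 / 2 : ℂ)) (𝓝[>] 0) (𝓝 (c / a)) := by
    simpa [τ] using tendsto_inv_div_cpow_half hac
  have hI : Tendsto (fun ε => (I / τ ε) ^ (1 / 2 : ℂ)) (𝓝[>] 0)
      (𝓝 (√(c / a) * eFun (1 / 8))) := by
    simpa [τ] using tendsto_I_div_cpow_half hac
  have hL := tendsto_sqrt_mul_jacobiTheta₂_cusp hc h tendsto_im_neg_one_div_I_mul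
  have hright : Tendsto (fun ε => (-1 / (c / a - 1 / τ ε)).im) (𝓝[>] 0) atTop := by
    simpa [τ] using tendsto_im_neg_one_div_inversion hac
  have heven : Even ((-c : ℤ) * a + -b) := by
    rwa [neg_mul, ← neg_add, even_neg, mul_comm]
  have hR := tendsto_sqrt_mul_tsum_periodic_mul_exp ha
    (periodic_eFun_quadratic ha heven) hright (b / (2 * c))
  have hlim := tendsto_nhds_unique_of_eventuallyEq (hscale.mul hL)
    (hI.mul (hR.const_mul (eFun (-(b ^ 2 / (8 * a * c)))))) <| by
      filter_upwards [self_mem_nhdsWithin] with ε hε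
      simpa using cpow_mul_jacobiTheta₂_inversion ha hc b hε rfl rfl
  simp only [Int.cast_natCast] at hlim
  rw [← siegelSum, ← mul_assoc, div_mul_div_cancel₀' hc0] at hlim
  rw [sub_eq_add_neg, eFun_add]
  refine mul_left_cancel₀ (one_div_ne_zero ha0) (hlim.trans ?_)
  ring

end Theta

section Dedekind

lemma dedekindS_eq_sum_fract (d : ℤ) (c : ℕ) :
    dedekindS d c = ∑ r ∈ range c, (r : ℝ) / c * (Int.fract ((d : ℝ) * r / c) - 1 / 2) := by
  rcases c with _ | c
  · simp [dedekindS]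
  · rw [dedekindS, sum_range_succ', range_eq_Ico, sum_Ico_add' (fun r : ℕ =>
      (r : ℝ) / (c + 1 : ℕ) * (Int.fract ((d : ℝ) * r / (c + 1 : ℕ)) - 1 / 2)) 0 c 1]
    simp only [Int.fract, Nat.cast_zero, zero_div, zero_mul, add_zero]
    rfl

lemma dedekindS_add_mul (d m : ℤ) (c : ℕ) : dedekindS (d + c * m) c = dedekindS d c := by
  simp only [dedekindS_eq_sum_fract]
  refine sum_congr rfl fun r hr => ?_
  have hc : (c : ℝ) ≠ 0 := Nat.cast_ne_zero.mpr (Nat.ne_zero_of_lt (mem_range.mp hr))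
  have harg : ((d + c * m : ℤ) : ℝ) * r / c = d * r / c + (m * r : ℤ) := by
    push_cast
    field_simp
  rw [harg, Int.fract_add_intCast]

lemma dedekindS_neg {d : ℤ} {c : ℕ} (h : IsCoprime d c) :
    dedekindS (-d) c = -dedekindS d c := by
  simp only [dedekindS_eq_sum_fract, ← sum_neg_distrib]
  refine sum_congr rfl fun r hr => ?_
  have hrc := mem_range.mp hr
  rcases r.eq_zero_or_pos with rfl | hr0
  · simp
  have hfract : Int.fract ((d : ℝ) * r / c) ≠ 0 := by
    rw [Ne, Int.fract_eq_zero_iff, Set.mem_range]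
    rintro ⟨n, hn⟩
    have hc : (c : ℝ) ≠ 0 := Nat.cast_ne_zero.mpr (Nat.ne_zero_of_lt hrc)
    rw [eq_div_iff hc] at hn
    have hdvd : (c : ℤ) ∣ d * r := ⟨n, by rw [mul_comm (c : ℤ)]; exact_mod_cast hn.symm⟩
    exact Nat.not_dvd_of_pos_of_lt hr0 hrc
      (Int.natCast_dvd_natCast.mp (h.symm.dvd_of_dvd_mul_left hdvd))
  rw [Int.cast_neg, neg_mul, neg_div, Int.fract_neg hfract]
  ring

lemma sum_range_natCast (n : ℕ) : ∑ r ∈ range n, (r : ℝ) = n * (n - 1) / 2 := by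
  induction n with
  | zero => simp
  | succ n ih =>
    rw [sum_range_succ, ih]
    push_cast
    ring

lemma dedekindS_natCast (d : ℕ) {c : ℕ} (hc : 0 < c) :
    dedekindS d c = (∑ r ∈ range c, (r : ℝ) * (d * r % c : ℕ)) / c ^ 2 - (c - 1) / 4 := by
  have hterm (r : ℕ) : (r : ℝ) / c * (Int.fract (((d : ℤ) : ℝ) * r / c) - 1 / 2) =
      r * (d * r % c : ℕ) / c ^ 2 - r / (2 * c) := by
    rw [Int.cast_natCast, ← Nat.cast_mul, Int.fract_div_natCast_eq_div_natCast_mod]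
    field_simp
  rw [dedekindS_eq_sum_fract]
  simp only [hterm, sum_sub_distrib, ← sum_div, sum_range_natCast]
  field_simp
  ring

lemma sum_range_natCast_sq (n : ℕ) :
    ∑ r ∈ range n, (r : ℝ) ^ 2 = n * (n - 1) * (2 * n - 1) / 6 := by
  induction n with
  | zero => simp
  | succ n ih =>
    rw [sum_range_succ, ih]
    push_cast
    ring

lemma sum_range_mul_mod {M : Type*} [AddCommMonoid M] {d c : ℕ} (h : d.Coprime c) (φ : ℕ → M) :
    ∑ r ∈ range c, φ (d * r % c) = ∑ r ∈ range c, φ r := by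
  have hmaps : Set.MapsTo (fun r => d * r % c) (range c) (range c) := fun r hr =>
    by simpa using Nat.mod_lt _ (Nat.zero_lt_of_lt (mem_range.mp hr))
  have hinj : Set.InjOn (fun r => d * r % c) (range c) := fun r hr s hs hrs =>
    (Nat.ModEq.cancel_left_of_coprime h.symm hrs).eq_of_lt_of_lt (mem_range.mp hr)
      (mem_range.mp hs)
  exact sum_nbij _ hmaps hinj (surjOn_of_injOn_of_card_le _ hmaps hinj le_rfl) fun _ _ => rfl

lemma filter_mul_le_mul_eq_range {c d r : ℕ} (hd : 0 < d) (hr : r < c) :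
    {m ∈ range d | c * m ≤ d * r} = range (d * r / c + 1) := by
  ext m
  have hc : 0 < c := Nat.zero_lt_of_lt hr
  rw [mem_filter, mem_range, mem_range, Nat.lt_succ_iff, Nat.le_div_iff_mul_le hc, mul_comm m,
    and_iff_right_iff_imp]
  intro hm
  by_contra! hdm
  nlinarith

lemma mul_ne_mul_of_coprime {c d m : ℕ} (h : c.Coprime d) (hm0 : 0 < m) (hm : m < d) (r : ℕ) :
    c * m ≠ d * r := fun heq =>
  Nat.not_dvd_of_pos_of_lt hm0 hm (h.symm.dvd_of_dvd_mul_left ⟨r, heq⟩)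

/-- The weight `2m` is summed over the rectangle `0 ≤ r < c`, `0 ≤ m < d`, cut along its diagonal
`c m = d r`. -/
lemma sum_div_mul_add_sum_mul_div {c d : ℕ} (hc : 0 < c) (hd : 0 < d) (h : c.Coprime d) :
    ∑ r ∈ range c, (d * r / c) * (d * r / c + 1) + ∑ m ∈ range d, 2 * m * (c * m / d + 1) =
      c * (d * (d - 1)) := by
  have hbelow {r : ℕ} (hr : r ∈ range c) :
      (d * r / c) * (d * r / c + 1) = ∑ m ∈ range d with c * m ≤ d * r, 2 * m := by
    rw [filter_mul_le_mul_eq_range hd (mem_range.mp hr), ← mul_sum, mul_comm 2,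
      sum_range_id_mul_two, Nat.add_sub_cancel, mul_comm]
  have habove {m : ℕ} (hm : m ∈ range d) :
      2 * m * (c * m / d + 1) = ∑ r ∈ range c with ¬ c * m ≤ d * r, 2 * m := by
    rw [sum_const, smul_eq_mul, mul_comm]
    rcases m.eq_zero_or_pos with rfl | hm0
    · simp
    have hfilter : {r ∈ range c | ¬ c * m ≤ d * r} = {r ∈ range c | d * r ≤ c * m} :=
      filter_congr fun r _ => by
        have := mul_ne_mul_of_coprime h hm0 (mem_range.mp hm) r
        omega
    rw [hfilter, filter_mul_le_mul_eq_range hc (mem_range.mp hm), card_range]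
  rw [sum_congr rfl fun r => hbelow, sum_congr rfl fun m => habove,
    sum_comm' (s := range d) (t' := range c) (s' := fun r => {m ∈ range d | ¬ c * m ≤ d * r})
      (by simp only [mem_filter]; tauto), ← sum_add_distrib]
  simp only [sum_filter_add_sum_filter_not, sum_const, card_range, smul_eq_mul]
  rw [← mul_sum, mul_comm 2, sum_range_id_mul_two]

lemma natCast_mul_mod (d c r : ℕ) :
    ((d * r % c : ℕ) : ℝ) = d * r - c * (d * r / c : ℕ) := by
  rw [eq_sub_iff_add_eq]
  exact_mod_cast Nat.mod_add_div (d * r) c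

lemma sum_sq_mul_div_sq {c d : ℕ} (h : d.Coprime c) :
    ∑ r ∈ range c, (c : ℝ) ^ 2 * (d * r / c : ℕ) ^ 2 =
      (1 + d ^ 2) * ∑ r ∈ range c, (r : ℝ) ^ 2 -
        2 * d * ∑ r ∈ range c, (r : ℝ) * (d * r % c : ℕ) := by
  have hterm (r : ℕ) : (c : ℝ) ^ 2 * (d * r / c : ℕ) ^ 2 =
      (d * r % c : ℕ) ^ 2 + d ^ 2 * (r : ℝ) ^ 2 - 2 * d * (r * (d * r % c : ℕ)) := by
    rw [natCast_mul_mod]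
    ring
  simp only [hterm, sum_sub_distrib, sum_add_distrib, ← mul_sum]
  rw [sum_range_mul_mod h fun n => (n : ℝ) ^ 2]
  ring

theorem dedekindS_reciprocity {c d : ℕ} (hc : 0 < c) (hd : 0 < d) (h : c.Coprime d) :
    dedekindS d c + dedekindS c d = (d / c + c / d + 1 / (c * d)) / 12 - 1 / 4 := by
  have hfloor : ∑ r ∈ range c, (c : ℝ) * (d * r / c : ℕ) = c * ((c - 1) * (d - 1) / 2) := by
    have hperm := sum_range_mul_mod h.symm (fun n => (n : ℝ))
    simp only [natCast_mul_mod, sum_sub_distrib, ← mul_sum, sum_range_natCast] at hperm ⊢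
    linear_combination -hperm
  have hsq := sum_sq_mul_div_sq h.symm
  have hdual : ∑ m ∈ range d, (m : ℝ) * (c * m % d : ℕ) =
      c * ∑ m ∈ range d, (m : ℝ) ^ 2 - d * ∑ m ∈ range d, (m : ℝ) * (c * m / d : ℕ) := by
    rw [mul_sum, mul_sum, ← sum_sub_distrib]
    refine sum_congr rfl fun m _ => ?_
    rw [natCast_mul_mod]
    ring
  have hlattice : ∑ r ∈ range c, ((d * r / c : ℕ) : ℝ) ^ 2 + ∑ r ∈ range c, ((d * r / c : ℕ) : ℝ) +
      2 * (∑ m ∈ range d, (m : ℝ) * (c * m / d : ℕ) + ∑ m ∈ range d, (m : ℝ)) =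
      c * (d * (d - 1)) := by
    have := congrArg (Nat.cast : ℕ → ℝ) (sum_div_mul_add_sum_mul_div hc hd h)
    push_cast [Nat.cast_sub hd] at this
    simpa only [mul_add, mul_one, sum_add_distrib, mul_sum, sq, mul_assoc] using! this
  rw [← mul_sum] at hfloor hsq
  rw [sum_range_natCast_sq] at hsq hdual
  rw [sum_range_natCast] at hlattice
  rw [dedekindS_natCast d hc, dedekindS_natCast c hd, hdual]
  have hc0 : (c : ℝ) ≠ 0 := Nat.cast_ne_zero.mpr hc.ne'
  have hd0 : (d : ℝ) ≠ 0 := Nat.cast_ne_zero.mpr hd.ne'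
  linear_combination (norm := skip) hsq / (2 * d * c ^ 2) -
    (hlattice - mul_left_cancel₀ hc0 hfloor) / (2 * d)
  field_simp
  ring

end Dedekind

section Character

lemma chi12_add_twelve_mul (j m : ℤ) : chi12 (j + 12 * m) = chi12 j := by
  rw [chi12, chi12, Int.add_mul_emod_self_left]

lemma chi12_six_mul_add_one (q : ℤ) : (chi12 (6 * q + 1) : ℝ) = (-1) ^ q := by
  rcases Int.even_or_odd' q with ⟨m, rfl | rfl⟩
  · rw [chi12, if_pos (by omega), (even_two_mul m).neg_one_zpow, Int.cast_one]
  · rw [chi12, if_neg (by omega), if_pos (by omega), (odd_two_mul_add_one m).neg_one_zpow,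
      Int.cast_neg, Int.cast_one]

lemma chi12_six_mul_sub_one (q : ℤ) : (chi12 (6 * q - 1) : ℝ) = (-1) ^ q := by
  rcases Int.even_or_odd' q with ⟨m, rfl | rfl⟩
  · rw [chi12, if_pos (by omega), (even_two_mul m).neg_one_zpow, Int.cast_one]
  · rw [chi12, if_neg (by omega), if_pos (by omega), (odd_two_mul_add_one m).neg_one_zpow,
      Int.cast_neg, Int.cast_one]

lemma chi12_eq_zero {k : ℤ} (hk : 2 ∣ k ∨ 3 ∣ k) : chi12 k = 0 := by
  rw [chi12, if_neg (by omega), if_neg (by omega)]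

lemma dvd_or_exists_eq_six_mul (k : ℤ) :
    (2 ∣ k ∨ 3 ∣ k) ∨ ∃ q, k = 6 * q + 1 ∨ k = 6 * q - 1 := by
  by_cases hk : k % 6 = 1
  · exact Or.inr ⟨k / 6, by omega⟩
  by_cases hk' : k % 6 = 5
  · exact Or.inr ⟨k / 6 + 1, by omega⟩
  · omega

lemma four_mul_sin_mul_sin_eq_sqrt_mul_chi12 (k : ℤ) :
    4 * (Real.sin (k * Real.pi / 2) * Real.sin (k * Real.pi / 3)) = √12 * chi12 k := by
  have hsqrt : √12 = 2 * √3 := by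
    rw [show (12 : ℝ) = 2 ^ 2 * 3 by norm_num, Real.sqrt_mul (by norm_num),
      Real.sqrt_sq (by norm_num)]
  have hsign (q : ℤ) : (-1 : ℝ) ^ (3 * q) = (-1) ^ q := by
    rw [zpow_mul]
    norm_num
  have heven (q : ℤ) : (-1 : ℝ) ^ (2 * q) = 1 := (even_two_mul q).neg_one_zpow
  rcases dvd_or_exists_eq_six_mul k with hk | ⟨q, rfl | rfl⟩
  · rw [chi12_eq_zero hk, Int.cast_zero, mul_zero, mul_eq_zero, mul_eq_zero]
    right
    refine hk.imp ?_ ?_ <;>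
    · rintro ⟨m, rfl⟩
      rw [← Real.sin_int_mul_pi m]
      congr 1
      push_cast
      ring
  · rw [show ((6 * q + 1 : ℤ) : ℝ) * Real.pi / 2 = Real.pi / 2 + (3 * q : ℤ) * Real.pi by
        push_cast; ring,
      show ((6 * q + 1 : ℤ) : ℝ) * Real.pi / 3 = Real.pi / 3 + (2 * q : ℤ) * Real.pi by
        push_cast; ring, Real.sin_add_int_mul_pi, Real.sin_add_int_mul_pi, Real.sin_pi_div_two,
      Real.sin_pi_div_three, hsign, heven, hsqrt, chi12_six_mul_add_one]
    ring
  · rw [show ((6 * q - 1 : ℤ) : ℝ) * Real.pi / 2 = -(Real.pi / 2) + (3 * q : ℤ) * Real.pi by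
        push_cast; ring,
      show ((6 * q - 1 : ℤ) : ℝ) * Real.pi / 3 = -(Real.pi / 3) + (2 * q : ℤ) * Real.pi by
        push_cast; ring, Real.sin_add_int_mul_pi, Real.sin_add_int_mul_pi, Real.sin_neg,
      Real.sin_neg, Real.sin_pi_div_two, Real.sin_pi_div_three, hsign, heven, hsqrt,
      chi12_six_mul_sub_one]
    ring

lemma sum_chi12_mul (f : ℤ → ℂ) :
    ∑ h ∈ ({1, 5, 7, 11} : Finset ℤ), chi12 h * f h = f 1 + (-f 5 + (-f 7 + f 11)) := by
  simp [chi12]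

lemma sum_range_chi12_mul (f : ℕ → ℂ) :
    ∑ i ∈ range 12, chi12 i * f i = f 1 + (-f 5 + (-f 7 + f 11)) := by
  simp [sum_range_succ, chi12, add_assoc]

lemma eFun_neg_add_eFun (x : ℝ) : eFun (-x) + eFun x = 2 * Real.cos (2 * Real.pi * x) := by
  rw [eFun, eFun, Complex.ofReal_cos, Complex.two_cos, add_comm]
  congr 2 <;> push_cast <;> ring

lemma sum_chi12_mul_eFun (k : ℤ) :
    ∑ h ∈ ({1, 5, 7, 11} : Finset ℤ), (chi12 h : ℂ) * eFun (-(h * k / 12)) =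
      √12 * chi12 k := by
  have h7 : eFun (-(7 * k / 12)) = eFun (5 * k / 12) := by
    rw [← eFun_add_intCast _ k]
    ring_nf
  have h11 : eFun (-(11 * k / 12)) = eFun (1 * k / 12) := by
    rw [← eFun_add_intCast _ k]
    ring_nf
  have hsum : ∑ h ∈ ({1, 5, 7, 11} : Finset ℤ), (chi12 h : ℂ) * eFun (-(h * k / 12)) =
      (eFun (-(1 * k / 12)) + eFun (1 * k / 12)) - (eFun (-(5 * k / 12)) + eFun (5 * k / 12)) := by
    rw [← h7, ← h11, sum_chi12_mul fun h => eFun (-(h * k / 12))]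
    push_cast
    ring
  have hcos : 2 * Real.cos (2 * Real.pi * (1 * k / 12)) -
      2 * Real.cos (2 * Real.pi * (5 * k / 12)) = √12 * chi12 k := by
    rw [← four_mul_sin_mul_sin_eq_sqrt_mul_chi12, ← mul_sub, Real.cos_sub_cos,
      show (2 * Real.pi * (1 * k / 12) - 2 * Real.pi * (5 * k / 12)) / 2 =
        -(k * Real.pi / 3) by ring, Real.sin_neg]
    ring_nf
  rw [hsum, eFun_neg_add_eFun, eFun_neg_add_eFun]
  exact_mod_cast hcos

lemma twentyFour_dvd_sq_sub_one {k : ℤ} (hk : chi12 k ≠ 0) : 24 ∣ k ^ 2 - 1 := by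
  rcases dvd_or_exists_eq_six_mul k with hk0 | ⟨q, hq⟩
  · exact absurd (chi12_eq_zero hk0) hk
  · obtain ⟨s, hs⟩ : Even (q * (3 * q + 1)) := by grind
    obtain ⟨t, ht⟩ : Even (q * (3 * q - 1)) := by grind
    rcases hq with rfl | rfl
    · exact ⟨s, by linear_combination 12 * hs⟩
    · exact ⟨t, by linear_combination 12 * ht⟩

lemma chi12_mul_eFun_add (m k : ℤ) (x : ℝ) :
    chi12 k * eFun (x + m * (k ^ 2 - 1) / 24) = chi12 k * eFun x := by
  by_cases hk : chi12 k = 0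
  · rw [hk, Int.cast_zero, zero_mul, zero_mul]
  obtain ⟨u, hu⟩ := twentyFour_dvd_sq_sub_one hk
  have hu' : (k : ℝ) ^ 2 - 1 = 24 * u := by exact_mod_cast hu
  rw [← eFun_add_intCast x (m * u), hu']
  push_cast
  ring_nf

lemma sum_range_twelve_mul (c : ℕ) (F : ℤ → ℂ) :
    ∑ j ∈ range (12 * c), (chi12 j : ℂ) * F j =
      ∑ h ∈ ({1, 5, 7, 11} : Finset ℤ), (chi12 h : ℂ) * ∑ x ∈ range c, F (h + 12 * x) := by
  induction c with
  | zero => simp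
  | succ c ih =>
    have hchi (i : ℕ) : chi12 ((12 * c + i : ℕ) : ℤ) = chi12 i := by
      rw [Nat.cast_add, add_comm, Nat.cast_mul, Nat.cast_ofNat, chi12_add_twelve_mul]
    rw [mul_add_one, sum_range_add, ih]
    simp only [sum_range_succ _ c, mul_add, sum_add_distrib, hchi]
    congr 1
    rw [sum_range_chi12_mul fun i => F (12 * c + i : ℕ), sum_chi12_mul fun h => F (h + 12 * c)]
    push_cast
    simp only [add_comm]

lemma sum_range_neg_of_periodic {M : Type*} [AddCommMonoid M] {f : ℤ → M} {c : ℕ}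
    (hf : Function.Periodic f c) : ∑ x ∈ range c, f (-x) = ∑ x ∈ range c, f x := by
  cases c with
  | zero => rfl
  | succ c =>
    rw [sum_range_succ', sum_range_succ', ← sum_range_reflect, Nat.cast_zero, neg_zero]
    congr 1
    refine sum_congr rfl fun x hx => ?_
    rw [← hf]
    congr 1
    have := mem_range.mp hx
    omega

end Character

section TwistedSum

/-- The Gauss sum of `j ↦ -(d j² + 2 j k) / (24c)` over `j` modulo `12c`, twisted by `χ₁₂`. -/
noncomputable def twistedSum (d : ℤ) (c : ℕ) (k : ℤ) : ℂ :=
  ∑ j ∈ range (12 * c), chi12 j * eFun (-(d * (j : ℝ) ^ 2 + 2 * j * k) / (24 * c))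

/-- The value of `twistedSum d c k` in terms of a Dedekind sum and of an inverse `dbar` of `d`
modulo `c`. -/
noncomputable def twistedSumValue (d dbar : ℤ) (c : ℕ) (k : ℤ) : ℂ :=
  √(12 * c) * chi12 k *
    eFun ((dbar * ((k : ℝ) ^ 2 - 1) - d) / (24 * c) + dedekindS d c / 2)

lemma twistedSum_eq_sum_quadGaussSum (d : ℤ) {c : ℕ} (hc : 0 < c) (k : ℤ) :
    twistedSum d c k = ∑ h ∈ ({1, 5, 7, 11} : Finset ℤ), chi12 h *
      (eFun (-(d * (h : ℝ) ^ 2 + 2 * h * k) / (24 * c)) *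
        quadGaussSum (-6 * d) (d * h + k) c) := by
  have hc0 : (c : ℝ) ≠ 0 := Nat.cast_ne_zero.mpr hc.ne'
  let F : ℤ → ℂ := fun j => eFun (-(d * (j : ℝ) ^ 2 + 2 * j * k) / (24 * c))
  have hperiodic (h : ℤ) : Function.Periodic (fun x => F (h + 12 * x)) c := fun x => by
    simp only [F]
    rw [← eFun_add_intCast _ (d * h + 12 * d * x + 6 * d * c + k)]
    congr 1
    push_cast
    field_simp
    ring
  have hreindex : twistedSum d c k =
      ∑ h ∈ ({1, 5, 7, 11} : Finset ℤ), chi12 h * ∑ x ∈ range c, F (h + 12 * x) :=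
    sum_range_twelve_mul c F
  rw [hreindex]
  refine sum_congr rfl fun h _ => ?_
  rw [← sum_range_neg_of_periodic (M := ℂ) (hperiodic h), quadGaussSum]
  congr 1
  rw [mul_sum]
  refine sum_congr rfl fun x _ => ?_
  rw [← eFun_add]
  simp only [F]
  congr 1
  push_cast
  field_simp
  ring

lemma twistedSum_add_mul (d m : ℤ) {c : ℕ} (hc : 0 < c) (k : ℤ) :
    twistedSum (d + c * m) c k = eFun (-m / 24) * twistedSum d c k := by
  have hc0 : (c : ℝ) ≠ 0 := Nat.cast_ne_zero.mpr hc.ne'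
  rw [twistedSum, twistedSum, mul_sum]
  refine sum_congr rfl fun j _ => ?_
  rw [mul_left_comm, ← eFun_add, ← chi12_mul_eFun_add m j]
  congr 2
  push_cast
  field_simp
  ring

lemma twistedSumValue_add_mul (d m dbar : ℤ) {c : ℕ} (hc : 0 < c) (k : ℤ) :
    twistedSumValue (d + c * m) dbar c k = eFun (-m / 24) * twistedSumValue d dbar c k := by
  have hc0 : (c : ℝ) ≠ 0 := Nat.cast_ne_zero.mpr hc.ne'
  rw [twistedSumValue, twistedSumValue, dedekindS_add_mul, mul_left_comm, ← eFun_add]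
  congr 2
  push_cast
  field_simp
  ring

lemma siegelSum_two_mul (a b : ℤ) (c : ℕ) :
    siegelSum (2 * a) (2 * b) c = quadGaussSum a b c := by
  refine sum_congr rfl fun n _ => ?_
  rw [← mul_div_mul_left _ _ (two_ne_zero' ℝ)]
  push_cast
  ring_nf

lemma sqrt_mul_twistedSum (d : ℤ) {c : ℕ} (hc : 0 < c) (k : ℤ) :
    √12 * twistedSum d c k = ∑ h ∈ ({1, 5, 7, 11} : Finset ℤ),
      chi12 h * siegelSum (-d) (2 * -(c * h + k)) (12 * c) := by
  simp only [twistedSum, siegelSum, mul_sum]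
  rw [sum_comm]
  refine sum_congr rfl fun j _ => ?_
  have hfourier := sum_chi12_mul_eFun j
  rw [Int.cast_natCast] at hfourier
  rw [← mul_assoc, ← hfourier, sum_mul]
  refine sum_congr rfl fun h _ => ?_
  rw [mul_assoc, ← eFun_add]
  congr 2
  push_cast
  field_simp
  ring

lemma twistedSum_reciprocity {c d : ℕ} (hc : 0 < c) (hd : 0 < d) (k : ℤ) :
    √12 * twistedSum (-c) d k =
      √(12 * d / c) * eFun (1 / 8 - k ^ 2 / (24 * c * d)) * twistedSum d c k := by
  have heven (h : ℤ) : Even ((c : ℤ) * (12 * d : ℕ) + 2 * -(d * h + k)) := by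
    push_cast
    exact ⟨6 * c * d - (d * h + k), by ring⟩
  have hgauss (h : ℤ) : siegelSum (-(12 * d : ℕ)) (-(2 * -(d * h + k))) c =
      quadGaussSum (-6 * d) (d * h + k) c := by
    rw [← siegelSum_two_mul]
    push_cast
    ring_nf
  rw [sqrt_mul_twistedSum _ hd, twistedSum_eq_sum_quadGaussSum _ hc, mul_sum]
  refine sum_congr rfl fun h _ => ?_
  rw [neg_neg, siegelSum_reciprocity hc (by positivity) (heven h), hgauss]
  have hphase : 1 / 8 - ((2 * -(d * h + k) : ℤ) : ℝ) ^ 2 / (8 * c * (12 * d : ℕ)) =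
      1 / 8 - k ^ 2 / (24 * c * d) + -((d : ℤ) * (h : ℝ) ^ 2 + 2 * h * k) / (24 * c) := by
    push_cast
    field_simp
    ring
  rw [hphase, eFun_add]
  push_cast
  ring

lemma twistedSumValue_reciprocity {c d : ℕ} (hc : 0 < c) (hd : 0 < d) {dbar v : ℤ}
    (hv : d * dbar - 1 = c * v) (k : ℤ) :
    √12 * twistedSumValue (-c) v d k =
      √(12 * d / c) * eFun (1 / 8 - k ^ 2 / (24 * c * d)) * twistedSumValue d dbar c k := by
  have hc0 : (c : ℝ) ≠ 0 := Nat.cast_ne_zero.mpr hc.ne'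
  have hd0 : (d : ℝ) ≠ 0 := Nat.cast_ne_zero.mpr hd.ne'
  have hcoprime : IsCoprime (c : ℤ) d := ⟨-v, dbar, by linear_combination hv⟩
  have hreciprocity := dedekindS_reciprocity hc hd (Nat.isCoprime_iff_coprime.mp hcoprime)
  have hv' : (v : ℝ) = (d * dbar - 1) / c := by
    rw [eq_div_iff hc0, mul_comm]
    exact_mod_cast hv.symm
  have hsqrt : √12 * √(12 * d) = √(12 * d / c) * √(12 * c) := by
    rw [← Real.sqrt_mul (by positivity), ← Real.sqrt_mul (by positivity)]
    congr 1
    field_simp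
  have hphase : (v * ((k : ℝ) ^ 2 - 1) - (-c : ℤ)) / (24 * d) + dedekindS (-c) d / 2 =
      1 / 8 - k ^ 2 / (24 * c * d) +
        ((dbar * ((k : ℝ) ^ 2 - 1) - (d : ℤ)) / (24 * c) + dedekindS d c / 2) := by
    rw [dedekindS_neg hcoprime, hv']
    linear_combination (norm := skip) (-1 / 2) * hreciprocity
    push_cast
    field_simp
    ring
  rw [twistedSumValue, twistedSumValue, hphase, eFun_add]
  have hsqrt' : (√12 * √(12 * d) : ℂ) = √(12 * d / c) * √(12 * c) := by exact_mod_cast hsqrt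
  linear_combination chi12 k * (eFun (1 / 8 - k ^ 2 / (24 * c * d)) *
    eFun ((dbar * ((k : ℝ) ^ 2 - 1) - (d : ℤ)) / (24 * c) + dedekindS d c / 2)) * hsqrt'

lemma twistedSum_zero_one (dbar k : ℤ) : twistedSum 0 1 k = twistedSumValue 0 dbar 1 k := by
  have hdedekind : dedekindS 0 1 = 0 := by simp [dedekindS]
  have hgauss (a b : ℤ) : quadGaussSum a b 1 = 1 := by simp [quadGaussSum, eFun]
  have hvalue : chi12 k * eFun ((dbar * (k ^ 2 - 1) - (0 : ℤ)) / (24 * (1 : ℕ)) + 0 / 2) =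
      chi12 k := by
    have hzero : eFun 0 = 1 := by simp [eFun]
    simpa [hzero] using chi12_mul_eFun_add dbar k 0
  have hphase (h : ℤ) : -(((0 : ℤ) : ℝ) * h ^ 2 + 2 * h * k) / (24 * (1 : ℕ)) = -(h * k / 12) := by
    push_cast
    ring
  rw [twistedSum_eq_sum_quadGaussSum 0 one_pos, twistedSumValue, mul_assoc, hdedekind]
  simp only [hgauss, mul_one, hphase, sum_chi12_mul_eFun]
  rw [hvalue, Nat.cast_one, mul_one]

theorem twistedSum_eq {c : ℕ} (hc : 0 < c) {d dbar : ℤ} (h : (c : ℤ) ∣ d * dbar - 1) (k : ℤ) :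
    twistedSum d c k = twistedSumValue d dbar c k := by
  induction c using Nat.strong_induction_on generalizing d dbar with
  | _ c ih =>
  obtain ⟨r, hr⟩ := Int.eq_ofNat_of_zero_le (Int.emod_nonneg d (Int.natCast_ne_zero.mpr hc.ne'))
  have hrc : r < c := by
    have := Int.emod_lt_of_pos d (Int.natCast_pos.mpr hc)
    omega
  obtain ⟨m, rfl⟩ : ∃ m, d = r + c * m := ⟨d / c, by rw [← hr, Int.emod_add_mul_ediv]⟩
  obtain ⟨v, hv⟩ : (c : ℤ) ∣ r * dbar - 1 := by
    have := h.sub (Dvd.intro (m * dbar) rfl)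
    ring_nf at this ⊢
    exact this
  rw [twistedSum_add_mul _ _ hc, twistedSumValue_add_mul _ _ _ hc]
  congr 1
  rcases r.eq_zero_or_pos with rfl | hr0
  · have hc1 : (c : ℤ) ∣ 1 := ⟨-v, by linear_combination -hv⟩
    obtain rfl : c = 1 := Nat.dvd_one.mp (Int.natCast_dvd_natCast.mp hc1)
    exact twistedSum_zero_one dbar k
  have hrecip := twistedSum_reciprocity hc hr0 k
  rw [ih r hrc hr0 (dbar := v) ⟨-dbar, by linear_combination hv⟩,
    twistedSumValue_reciprocity hc hr0 hv] at hrecip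
  refine (mul_left_cancel₀ (mul_ne_zero ?_ (Complex.exp_ne_zero _)) hrecip).symm
  exact Complex.ofReal_ne_zero.mpr (Real.sqrt_ne_zero'.mpr (by positivity))

end TwistedSum

theorem statement6 :
    ∀ c : ℕ, 1 ≤ c → ∀ d dbar k : ℤ,
      Int.gcd d (c : ℤ) = 1 → (c : ℤ) ∣ d * dbar - 1 →
      (Real.sqrt (12 * c) : ℂ) * (chi12 k : ℂ) *
          eFun ((dbar : ℝ) * ((k : ℝ) ^ 2 - 1) / (24 * c)) *
          Complex.exp ((Real.pi : ℂ) * Complex.I * (dedekindS d c)) =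
        ∑ h ∈ ({1, 5, 7, 11} : Finset ℤ),
          (chi12 h : ℂ) *
            eFun (-((d : ℝ) * ((h : ℝ) ^ 2 - 1)) / (24 * c) - (h : ℝ) * (k : ℝ) / (12 * c)) *
            quadGaussSum (-6 * d) (d * h + k) c := by
  intro c hc d dbar k _ hdbar
  have hleft : √(12 * c) * chi12 k * eFun (dbar * ((k : ℝ) ^ 2 - 1) / (24 * c)) *
      Complex.exp (Real.pi * Complex.I * dedekindS d c) =
        eFun (d / (24 * c)) * twistedSumValue d dbar c k := by
    have hexp : Complex.exp (Real.pi * Complex.I * dedekindS d c) = eFun (dedekindS d c / 2) := by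
      rw [eFun]
      congr 1
      push_cast
      ring
    rw [hexp, twistedSumValue, mul_left_comm, mul_assoc, ← eFun_add, ← eFun_add]
    ring_nf
  rw [hleft, ← twistedSum_eq hc hdbar, twistedSum_eq_sum_quadGaussSum d hc, mul_sum]
  refine sum_congr rfl fun h _ => ?_
  rw [mul_left_comm, ← mul_assoc (eFun _), ← eFun_add, ← mul_assoc]
  congr 3
  ring
end

section
/- Let 0 < δ < 1/2, c₁, c₂ > 0, C₀ > 0 and let M be a positive integer. There exists a constant C > 0 such that for all real a, x, T > 0 with T ≤ x/3 and c₁·x^{1−δ} ≤ T ≤ c₂·x^{1−δ}, and every (a,x,T,C₀,M)-admissible test function φ, the following hold: |φ̌(r)| ≤ C·r^{−3/2}·e^{−r/2} for all r with 1 ≤ r ≤ a/(8x); |φ̌(r)| ≤ C·r^{−1} for all r with max(a/(8x), 1) ≤ r ≤ a/x; and |φ̌(r)| ≤ C·min(r^{−3/2}, r^{−5/2}·x/T) for all r ≥ max(a/x, 1). -/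
open Real

/-- The modified Bessel function of imaginary order:
`K_{iν}(x) = ∫_0^∞ exp(−x cosh t) cos(νt) dt`. -/
noncomputable def KBessel (ν x : ℝ) : ℝ :=
  ∫ t in Set.Ioi (0:ℝ), Real.exp (-x * Real.cosh t) * Real.cos (ν * t)

/-- `f` is piecewise monotone on at most `M` subintervals of `[0,∞)`:
there are points `0 = a 0 ≤ a 1 ≤ … ≤ a (M−1)` such that `f` is monotone or antitone
on each `[a i, a (i+1)]` for `i + 1 < M`, and on the final ray `[a (M−1), ∞)`. -/
def PiecewiseMono (f : ℝ → ℝ) (M : ℕ) : Prop :=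
  ∃ a : ℕ → ℝ, a 0 = 0 ∧ Monotone a ∧
    (∀ i : ℕ, i + 1 < M →
      MonotoneOn f (Set.Icc (a i) (a (i + 1))) ∨
        AntitoneOn f (Set.Icc (a i) (a (i + 1)))) ∧
    (MonotoneOn f (Set.Ici (a (M - 1))) ∨ AntitoneOn f (Set.Ici (a (M - 1))))

/-- An `(a,x,T,C₀,M)`-admissible test function. -/
def IsAdmissible (a x T C₀ : ℝ) (M : ℕ) (φ : ℝ → ℝ) : Prop :=
  ContDiff ℝ (⊤ : ℕ∞) φ ∧
  (∀ t : ℝ, 0 ≤ φ t ∧ φ t ≤ 1) ∧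
  (∀ t : ℝ, a / (2 * x) ≤ t → t ≤ a / x → φ t = 1) ∧
  (∀ t : ℝ, t ≤ a / (2 * x + 2 * T) → φ t = 0) ∧
  (∀ t : ℝ, a / (x - T) ≤ t → φ t = 0) ∧
  (∀ t : ℝ, 0 ≤ t → |deriv φ t| ≤ C₀ * x ^ 2 / (a * T)) ∧
  PiecewiseMono φ M ∧ PiecewiseMono (deriv φ) M

/-- The `K`-Bessel transform `φ̌(r) = cosh(πr) ∫_0^∞ K_{2ir}(u) φ(u) du/u`. -/
noncomputable def phiCheck (φ : ℝ → ℝ) (r : ℝ) : ℝ :=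
  Real.cosh (Real.pi * r) * ∫ u in Set.Ioi (0:ℝ), KBessel (2 * r) u * φ u / u

/-!
Write `ν = 2 r`, `k = cosh (π r) * K_{iν}` and `p = u k'`, so that `u p' = (u² - ν²) k`. The energy
`p² + (ν² - u²) k²` has derivative `-2 u k²`. By `K_s(u) ~ Γ(s) (2 / u)^s / 2` and the reflection
formula for `Γ` its limit at `0` is `O(ν)`; this bounds `k` and `p` for `u < ν`.

* For `r ≤ a / (8 x)` the support of `φ` lies in `u ≥ 3 ν / 2`, where the recessive solution `k` is
  exponentially smaller than `k ν`.
* For `r ≤ a / x` the support may contain the turning point `u = ν`. A weight `Z`, which is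
  `(ν² - u²)^(-1/4)` smoothed at scale `ν^(1/3)`, keeps the weighted energy bounded through the
  transition region. There `p Z⁴` is almost a primitive of `-k / u`, so the primitive of `k / u`
  varies by `O(1 / ν)`; integrating by parts against `φ`, whose total variation is at most `M`,
  costs nothing more.
* For `r ≥ a / x` the support lies in `u ≤ 3 ν / 4`, where `k` oscillates and `ν² - u² ≫ ν²`. One
  integration by parts gives `ν^(-3/2)`, and a second one gives `ν^(-5/2)` at the cost of
  `∫ u |φ''| = O(x / T)`.
-/

open MeasureTheory Filter Set Topology

section Macdonald

/-- The integrand of the integral representation of Macdonald's function `K_s(u)`. -/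
noncomputable def macdonaldIntegrand (s : ℂ) (u t : ℝ) : ℂ :=
  Complex.exp (s * t - (u * Real.cosh t : ℝ))

/-- Macdonald's function `K_s(u)` of complex order `s`, as half the integral over the whole line:
contrary to the cosine integral defining `KBessel`, this has a two-term recurrence in `s`. -/
noncomputable def macdonaldK (s : ℂ) (u : ℝ) : ℂ :=
  (∫ t : ℝ, macdonaldIntegrand s u t) / 2

lemma norm_macdonaldIntegrand (s : ℂ) (u t : ℝ) :
    ‖macdonaldIntegrand s u t‖ = Real.exp (s.re * t - u * Real.cosh t) := by
  simp [macdonaldIntegrand, Complex.norm_exp]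

lemma continuous_macdonaldIntegrand (s : ℂ) (u : ℝ) : Continuous (macdonaldIntegrand s u) := by
  unfold macdonaldIntegrand
  fun_prop

lemma sq_div_four_le_cosh (t : ℝ) : t ^ 2 / 4 ≤ Real.cosh t := by
  have h := Real.quadratic_le_exp_of_nonneg (abs_nonneg t)
  rw [sq_abs] at h
  rw [← Real.cosh_abs, Real.cosh_eq]
  linarith [abs_nonneg t, Real.exp_pos (-|t|)]

lemma integrable_exp_mul_sub_mul_cosh (σ : ℝ) {u : ℝ} (hu : 0 < u) :
    Integrable fun t : ℝ => Real.exp (σ * t - u * Real.cosh t) := by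
  refine ((integrable_exp_neg_mul_sq (b := u / 8) (by positivity)).const_mul
    (Real.exp (2 * σ ^ 2 / u))).mono' (by fun_prop) (Eventually.of_forall fun t => ?_)
  have hamgm : σ * t ≤ 2 * σ ^ 2 / u + u / 8 * t ^ 2 := by
    have h : 0 ≤ (4 * σ - u * t) ^ 2 / (8 * u) := by positivity
    have e : (4 * σ - u * t) ^ 2 / (8 * u) = 2 * σ ^ 2 / u + u / 8 * t ^ 2 - σ * t := by
      field_simp
      ring
    linarith
  rw [Real.norm_of_nonneg (Real.exp_pos _).le, ← Real.exp_add]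
  gcongr
  nlinarith [mul_le_mul_of_nonneg_left (sq_div_four_le_cosh t) hu.le]

lemma integrable_macdonaldIntegrand (s : ℂ) {u : ℝ} (hu : 0 < u) :
    Integrable (macdonaldIntegrand s u) := by
  rw [← integrable_norm_iff (continuous_macdonaldIntegrand s u).aestronglyMeasurable]
  simpa only [norm_macdonaldIntegrand] using integrable_exp_mul_sub_mul_cosh s.re hu

lemma macdonaldIntegrand_add_one (s : ℂ) (u t : ℝ) :
    macdonaldIntegrand (s + 1) u t = Real.exp t * macdonaldIntegrand s u t := by
  rw [macdonaldIntegrand, macdonaldIntegrand, Complex.ofReal_exp, ← Complex.exp_add]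
  ring_nf

lemma macdonaldIntegrand_sub_one (s : ℂ) (u t : ℝ) :
    macdonaldIntegrand (s - 1) u t = Real.exp (-t) * macdonaldIntegrand s u t := by
  rw [macdonaldIntegrand, macdonaldIntegrand, Complex.ofReal_exp, ← Complex.exp_add]
  push_cast
  ring_nf

lemma hasDerivAt_macdonaldIntegrand_left (s : ℂ) (u t : ℝ) :
    HasDerivAt (fun v => macdonaldIntegrand s v t)
      (-(macdonaldIntegrand (s + 1) u t + macdonaldIntegrand (s - 1) u t) / 2) u := by
  have h : HasDerivAt (fun v : ℝ => s * t - ((v * Real.cosh t : ℝ) : ℂ))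
      (-((1 * Real.cosh t : ℝ) : ℂ)) u :=
    (((hasDerivAt_id u).mul_const (Real.cosh t)).ofReal_comp).const_sub _
  refine h.cexp.congr_deriv ?_
  rw [macdonaldIntegrand_add_one, macdonaldIntegrand_sub_one, macdonaldIntegrand, Real.cosh_eq]
  push_cast
  ring

lemma hasDerivAt_macdonaldIntegrand_right (s : ℂ) (u t : ℝ) :
    HasDerivAt (macdonaldIntegrand s u) (s * macdonaldIntegrand s u t
      - u / 2 * (macdonaldIntegrand (s + 1) u t - macdonaldIntegrand (s - 1) u t)) t := by
  have h : HasDerivAt (fun t : ℝ => s * t - ((u * Real.cosh t : ℝ) : ℂ))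
      (s * ((1 : ℝ) : ℂ) - ((u * Real.sinh t : ℝ) : ℂ)) t :=
    ((hasDerivAt_id t).ofReal_comp.const_mul s).sub
      ((Real.hasDerivAt_cosh t).const_mul u).ofReal_comp
  refine h.cexp.congr_deriv ?_
  rw [macdonaldIntegrand_add_one, macdonaldIntegrand_sub_one, Real.sinh_eq, macdonaldIntegrand]
  push_cast
  ring

lemma hasDerivAt_macdonaldK (s : ℂ) {u : ℝ} (hu : 0 < u) :
    HasDerivAt (macdonaldK s) (-(macdonaldK (s + 1) u + macdonaldK (s - 1) u) / 2) u := by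
  have hbound (s : ℂ) {v t : ℝ} (hv : u / 2 < v) :
      ‖macdonaldIntegrand s v t‖ ≤ Real.exp (s.re * t - u / 2 * Real.cosh t) := by
    rw [norm_macdonaldIntegrand]
    have := Real.cosh_pos t
    gcongr
  have key := hasDerivAt_integral_of_dominated_loc_of_deriv_le
    (F := macdonaldIntegrand s)
    (F' := fun v t => -(macdonaldIntegrand (s + 1) v t + macdonaldIntegrand (s - 1) v t) / 2)
    (bound := fun t => Real.exp ((s + 1).re * t - u / 2 * Real.cosh t)
      + Real.exp ((s - 1).re * t - u / 2 * Real.cosh t))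
    (Ioi_mem_nhds (half_lt_self hu))
    (Eventually.of_forall fun v => (continuous_macdonaldIntegrand s v).aestronglyMeasurable)
    (integrable_macdonaldIntegrand s hu)
    (((continuous_macdonaldIntegrand (s + 1) u).add
      (continuous_macdonaldIntegrand (s - 1) u)).neg.div_const 2).aestronglyMeasurable
    (Eventually.of_forall fun t v hv => ?_)
    ((integrable_exp_mul_sub_mul_cosh _ (half_pos hu)).add
      (integrable_exp_mul_sub_mul_cosh _ (half_pos hu)))
    (Eventually.of_forall fun t v _ => hasDerivAt_macdonaldIntegrand_left s v t)
  · refine (key.2.div_const 2).congr_deriv ?_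
    rw [integral_div, integral_neg, integral_add (integrable_macdonaldIntegrand _ hu)
      (integrable_macdonaldIntegrand _ hu), macdonaldK, macdonaldK]
    ring
  · rw [norm_div, norm_neg, Complex.norm_ofNat]
    refine (half_le_self (norm_nonneg _)).trans ((norm_add_le _ _).trans ?_)
    exact add_le_add (hbound _ hv) (hbound _ hv)

lemma mul_macdonaldK_add_one_sub (s : ℂ) {u : ℝ} (hu : 0 < u) :
    u * (macdonaldK (s + 1) u - macdonaldK (s - 1) u) = 2 * s * macdonaldK s u := by
  have hint (s : ℂ) := integrable_macdonaldIntegrand s hu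
  have hdiff := ((hint (s + 1)).sub (hint (s - 1))).const_mul (u / 2 : ℂ)
  have key := integral_eq_zero_of_hasDerivAt_of_integrable
    (hasDerivAt_macdonaldIntegrand_right s u) (((hint s).const_mul s).sub hdiff) (hint s)
  have hsub := integral_sub ((hint s).const_mul s) hdiff
  simp only [Pi.sub_apply, integral_const_mul, integral_sub (hint (s + 1)) (hint (s - 1))] at hsub
  rw [hsub] at key
  rw [macdonaldK, macdonaldK, macdonaldK]
  linear_combination -key

lemma hasDerivAt_mul_macdonaldK_add_one (s : ℂ) {u : ℝ} (hu : 0 < u) :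
    HasDerivAt (fun v : ℝ => v * macdonaldK (s + 1) v)
      (-(u * macdonaldK s u + s * macdonaldK (s + 1) u)) u := by
  refine ((hasDerivAt_id u).ofReal_comp.mul (hasDerivAt_macdonaldK (s + 1) hu)).congr_deriv ?_
  have h := mul_macdonaldK_add_one_sub (s + 1) hu
  rw [add_sub_cancel_right] at h ⊢
  simp only [id, Complex.ofReal_one]
  linear_combination (-1 / 2 : ℂ) * h

lemma macdonaldK_neg (s : ℂ) (u : ℝ) : macdonaldK (-s) u = macdonaldK s u := by
  rw [macdonaldK, macdonaldK, ← integral_neg_eq_self]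
  simp [macdonaldIntegrand]

lemma macdonaldK_conj (s : ℂ) (u : ℝ) :
    macdonaldK (starRingEnd ℂ s) u = starRingEnd ℂ (macdonaldK s u) := by
  rw [macdonaldK, macdonaldK, map_div₀, ← integral_conj]
  simp only [macdonaldIntegrand, ← Complex.exp_conj, map_sub, map_mul, Complex.conj_ofReal,
    map_ofNat]

lemma exists_norm_macdonaldK_le (s : ℂ) :
    ∃ B : ℝ, ∀ u : ℝ, 1 ≤ u → ‖macdonaldK s u‖ ≤ B * Real.exp (-u) := by
  refine ⟨Real.exp 1 * ∫ t : ℝ, Real.exp (s.re * t - 1 * Real.cosh t), fun u hu => ?_⟩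
  have hle : ‖∫ t, macdonaldIntegrand s u t‖ ≤
      ∫ t : ℝ, Real.exp (1 - u) * Real.exp (s.re * t - 1 * Real.cosh t) := by
    refine norm_integral_le_of_norm_le
      ((integrable_exp_mul_sub_mul_cosh s.re one_pos).const_mul _)
      (Eventually.of_forall fun t => ?_)
    rw [norm_macdonaldIntegrand, ← Real.exp_add]
    gcongr
    nlinarith [Real.one_le_cosh t]
  rw [integral_const_mul, sub_eq_add_neg, Real.exp_add] at hle
  rw [macdonaldK, norm_div, Complex.norm_ofNat]
  linarith [half_le_self (norm_nonneg (∫ t, macdonaldIntegrand s u t))]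

lemma tendsto_mul_macdonaldK_atTop (s : ℂ) :
    Tendsto (fun u : ℝ => u * macdonaldK s u) atTop (𝓝 0) := by
  obtain ⟨B, hB⟩ := exists_norm_macdonaldK_le s
  have h : Tendsto (fun u : ℝ => B * (u ^ 1 * Real.exp (-u))) atTop (𝓝 (B * 0)) :=
    (Real.tendsto_pow_mul_exp_neg_atTop_nhds_zero 1).const_mul B
  rw [mul_zero] at h
  refine squeeze_zero_norm' ?_ h
  filter_upwards [eventually_ge_atTop 1] with u hu
  rw [norm_mul, Complex.norm_real, Real.norm_of_nonneg (by linarith)]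
  nlinarith [mul_le_mul_of_nonneg_left (hB u hu) (by linarith : (0 : ℝ) ≤ u)]

lemma integral_cexp_mul_exp_neg_exp {s : ℂ} (hs : 0 < s.re) :
    Integrable (fun t : ℝ => Complex.exp (s * t) * Real.exp (-Real.exp t)) ∧
      ∫ t : ℝ, Complex.exp (s * t) * Real.exp (-Real.exp t) = Complex.Gamma s := by
  have hrange : Ioi (0 : ℝ) = Real.exp '' univ := by rw [image_univ, Real.range_exp]
  have hderiv : ∀ t ∈ univ, HasDerivWithinAt Real.exp (Real.exp t) univ t :=
    fun t _ => (Real.hasDerivAt_exp t).hasDerivWithinAt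
  have hsubst : (fun t : ℝ => |Real.exp t| • ((Real.exp (-Real.exp t) : ℂ)
      * (Real.exp t : ℂ) ^ (s - 1))) =
      fun t : ℝ => Complex.exp (s * t) * Real.exp (-Real.exp t) := by
    funext t
    rw [Complex.cpow_def_of_ne_zero (by exact_mod_cast (Real.exp_pos t).ne'),
      ← Complex.ofReal_log (Real.exp_pos t).le, Real.log_exp, Real.abs_exp, Complex.real_smul,
      Complex.ofReal_exp t, mul_left_comm, ← Complex.exp_add, mul_comm]
    ring_nf
  constructor
  · have h := Complex.GammaIntegral_convergent hs
    rwa [hrange, integrableOn_image_iff_integrableOn_abs_deriv_smul MeasurableSet.univ hderiv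
      Real.exp_injective.injOn, hsubst, integrableOn_univ] at h
  · rw [Complex.Gamma_eq_integral hs, Complex.GammaIntegral, hrange,
      integral_image_eq_integral_abs_deriv_smul MeasurableSet.univ hderiv
      Real.exp_injective.injOn, hsubst, Measure.restrict_univ]

/-- Shifting `t` by `log (u / 2)` makes `u cosh t` converge to `exp t` as `u → 0`. -/
lemma cpow_mul_macdonaldK (s : ℂ) {u : ℝ} (hu : 0 < u) :
    2 * ((u / 2 : ℝ) : ℂ) ^ s * macdonaldK s u =
      ∫ t : ℝ, Complex.exp (s * t) * Real.exp (-Real.exp t - u ^ 2 / 4 * Real.exp (-t)) := by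
  have hshift := integral_sub_right_eq_self
    (μ := volume) (macdonaldIntegrand s u) (Real.log (u / 2))
  rw [macdonaldK, ← hshift, mul_comm (2 : ℂ), mul_assoc, mul_div_cancel₀ _ two_ne_zero,
    ← integral_const_mul]
  refine integral_congr_ae (Eventually.of_forall fun t => ?_)
  have hcosh : u * Real.cosh (t - Real.log (u / 2)) =
      Real.exp t + u ^ 2 / 4 * Real.exp (-t) := by
    rw [Real.cosh_eq, neg_sub, Real.exp_sub, sub_eq_add_neg, Real.exp_add,
      Real.exp_log (by positivity)]
    field_simp
    ring
  simp only [macdonaldIntegrand]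
  rw [Complex.cpow_def_of_ne_zero (by exact_mod_cast (half_pos hu).ne'),
    ← Complex.ofReal_log (half_pos hu).le, hcosh, Complex.ofReal_exp, ← Complex.exp_add,
    ← Complex.exp_add]
  push_cast
  ring_nf

lemma tendsto_cpow_mul_macdonaldK {s : ℂ} (hs : 0 < s.re) :
    Tendsto (fun u : ℝ => 2 * ((u / 2 : ℝ) : ℂ) ^ s * macdonaldK s u) (𝓝[>] 0)
      (𝓝 (Complex.Gamma s)) := by
  obtain ⟨hint, hGamma⟩ := integral_cexp_mul_exp_neg_exp hs
  have hlim : Tendsto (fun u : ℝ => ∫ t : ℝ, Complex.exp (s * t)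
      * Real.exp (-Real.exp t - u ^ 2 / 4 * Real.exp (-t))) (𝓝 0) (𝓝 (Complex.Gamma s)) := by
    rw [← hGamma]
    refine tendsto_integral_filter_of_dominated_convergence _
      (Eventually.of_forall fun u => Continuous.aestronglyMeasurable (by fun_prop))
      (Eventually.of_forall fun u => Eventually.of_forall fun t => ?_) hint.norm
      (Eventually.of_forall fun t => ?_)
    · rw [norm_mul, norm_mul, Complex.norm_real, Complex.norm_real,
        Real.norm_of_nonneg (Real.exp_pos _).le, Real.norm_of_nonneg (Real.exp_pos _).le]
      gcongr
      have := mul_nonneg (sq_nonneg u) (Real.exp_pos (-t)).le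
      linarith
    · have hc : Continuous fun u : ℝ => Complex.exp (s * t)
          * Real.exp (-Real.exp t - u ^ 2 / 4 * Real.exp (-t)) := by fun_prop
      simpa using hc.tendsto 0
  refine (hlim.mono_left nhdsWithin_le_nhds).congr' ?_
  filter_upwards [self_mem_nhdsWithin] with u hu using (cpow_mul_macdonaldK s hu).symm

end Macdonald

section BesselPair

/-- `(k, p)` solves the modified Bessel equation of order `iν` on `(0, ∞)`, written as a first-order
system for `k` and its Euler derivative `p = u k'`. -/
structure IsBesselPair (ν : ℝ) (k p : ℝ → ℝ) : Prop where
  hasDerivAt_fst : ∀ u, 0 < u → HasDerivAt k (p u / u) u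
  hasDerivAt_snd : ∀ u, 0 < u → HasDerivAt p ((u ^ 2 - ν ^ 2) * k u / u) u

/-- A Bessel pair that is recessive at infinity, i.e. proportional to `K_{iν}`. -/
structure IsDecayingBesselPair (ν : ℝ) (k p : ℝ → ℝ) : Prop extends IsBesselPair ν k p where
  tendsto_mul_fst : Tendsto (fun u => u * k u) atTop (𝓝 0)
  tendsto_snd : Tendsto p atTop (𝓝 0)

/-- A decaying Bessel pair whose energy `p ^ 2 + (ν ^ 2 - u ^ 2) * k ^ 2` is `O(ν)`. The
normalisation `cosh (πν / 2) * K_{iν}`, which occurs in `phiCheck`, has this size. -/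
structure IsNormalizedBesselPair (ν : ℝ) (k p : ℝ → ℝ) : Prop
    extends IsDecayingBesselPair ν k p where
  energy_le : ∀ u, 0 < u → p u ^ 2 + (ν ^ 2 - u ^ 2) * k u ^ 2 ≤ 4 * ν

lemma monotoneOn_of_hasDerivAt_nonneg {s : Set ℝ} (hs : Convex ℝ s) {f f' : ℝ → ℝ}
    (hf : ∀ x ∈ s, HasDerivAt f (f' x) x) (hf' : ∀ x ∈ s, 0 ≤ f' x) : MonotoneOn f s :=
  monotoneOn_of_hasDerivWithinAt_nonneg hs (fun x hx => (hf x hx).continuousAt.continuousWithinAt)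
    (fun x hx => (hf x (interior_subset hx)).hasDerivWithinAt)
    fun x hx => hf' x (interior_subset hx)

lemma antitoneOn_of_hasDerivAt_nonpos {s : Set ℝ} (hs : Convex ℝ s) {f f' : ℝ → ℝ}
    (hf : ∀ x ∈ s, HasDerivAt f (f' x) x) (hf' : ∀ x ∈ s, f' x ≤ 0) : AntitoneOn f s :=
  antitoneOn_of_hasDerivWithinAt_nonpos hs (fun x hx => (hf x hx).continuousAt.continuousWithinAt)
    (fun x hx => (hf x (interior_subset hx)).hasDerivWithinAt)
    fun x hx => hf' x (interior_subset hx)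

lemma IsBesselPair.continuousOn_fst {ν : ℝ} {k p : ℝ → ℝ} (h : IsBesselPair ν k p) :
    ContinuousOn k (Ioi 0) :=
  fun u hu => (h.hasDerivAt_fst u hu).continuousAt.continuousWithinAt

lemma IsBesselPair.continuousOn_snd {ν : ℝ} {k p : ℝ → ℝ} (h : IsBesselPair ν k p) :
    ContinuousOn p (Ioi 0) :=
  fun u hu => (h.hasDerivAt_snd u hu).continuousAt.continuousWithinAt

lemma IsBesselPair.hasDerivAt_energy {ν : ℝ} {k p : ℝ → ℝ} (h : IsBesselPair ν k p) {u : ℝ}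
    (hu : 0 < u) : HasDerivAt (fun u => p u ^ 2 + (ν ^ 2 - u ^ 2) * k u ^ 2)
      (-(2 * u * k u ^ 2)) u := by
  refine (((h.hasDerivAt_snd u hu).pow 2).add ((((hasDerivAt_id u).pow 2).const_sub (ν ^ 2)).mul
    ((h.hasDerivAt_fst u hu).pow 2))).congr_deriv ?_
  simp only [Pi.pow_apply, id]
  field_simp
  ring

lemma IsBesselPair.antitoneOn_energy {ν : ℝ} {k p : ℝ → ℝ} (h : IsBesselPair ν k p) :
    AntitoneOn (fun u => p u ^ 2 + (ν ^ 2 - u ^ 2) * k u ^ 2) (Ioi 0) :=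
  antitoneOn_of_hasDerivAt_nonpos (convex_Ioi 0) (fun _ hu => h.hasDerivAt_energy hu)
    fun u hu => neg_nonpos.2 (mul_nonneg (mul_nonneg two_pos.le hu.le) (sq_nonneg (k u)))

end BesselPair

section KBessel

variable (ν : ℝ)

lemma macdonaldK_mul_I_sub_one (u : ℝ) :
    macdonaldK (ν * Complex.I - 1) u = starRingEnd ℂ (macdonaldK (ν * Complex.I + 1) u) := by
  rw [← macdonaldK_conj, ← macdonaldK_neg]
  simp [sub_eq_add_neg, add_comm]

lemma ofReal_KBessel {u : ℝ} (hu : 0 < u) :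
    (KBessel ν u : ℂ) = macdonaldK (ν * Complex.I) u := by
  have hreal : ((macdonaldK (ν * Complex.I) u).re : ℂ) = macdonaldK (ν * Complex.I) u := by
    rw [← Complex.conj_eq_iff_re, ← macdonaldK_conj, ← macdonaldK_neg]
    simp
  have heven (t : ℝ) : (macdonaldIntegrand (ν * Complex.I) u t).re =
      Real.exp (-u * Real.cosh |t|) * Real.cos (ν * |t|) := by
    rw [Real.cosh_abs, ← Real.cos_abs (ν * |t|), abs_mul, abs_abs, ← abs_mul, Real.cos_abs,
      macdonaldIntegrand, Complex.exp_re]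
    simp
  have hre := integral_re (integrable_macdonaldIntegrand (ν * Complex.I) hu)
  simp only [RCLike.re_eq_complex_re, heven] at hre
  rw [integral_comp_abs (f := fun t => Real.exp (-u * Real.cosh t) * Real.cos (ν * t))] at hre
  rw [← hreal, macdonaldK, Complex.div_ofNat_re, ← hre, KBessel, mul_div_cancel_left₀ _ two_ne_zero]

/-- The Euler derivative `u * K_{iν}'(u)`, expressed through Macdonald's function of the
neighbouring order. -/
noncomputable def KBesselEuler (u : ℝ) : ℝ :=
  -(u * macdonaldK (ν * Complex.I + 1) u).re

lemma hasDerivAt_re {f : ℝ → ℂ} {f' : ℂ} {x : ℝ} (h : HasDerivAt f f' x) :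
    HasDerivAt (fun x => (f x).re) f'.re x :=
  Complex.reCLM.hasFDerivAt.comp_hasDerivAt x h

lemma im_mul_macdonaldK {u : ℝ} (hu : 0 < u) :
    (u * macdonaldK (ν * Complex.I + 1) u).im = ν * KBessel ν u := by
  have hrec := congrArg Complex.im (mul_macdonaldK_add_one_sub (ν * Complex.I) hu)
  rw [macdonaldK_mul_I_sub_one, Complex.sub_conj, ← ofReal_KBessel ν hu] at hrec
  simp at hrec ⊢
  linarith

lemma isBesselPair_KBessel : IsBesselPair ν (KBessel ν) (KBesselEuler ν) where
  hasDerivAt_fst u hu := by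
    have hEq : KBessel ν =ᶠ[𝓝 u] fun u => (macdonaldK (ν * Complex.I) u).re := by
      filter_upwards [Ioi_mem_nhds hu] with v hv
      rw [← ofReal_KBessel ν hv, Complex.ofReal_re]
    refine ((hasDerivAt_re (hasDerivAt_macdonaldK _ hu)).congr_of_eventuallyEq hEq).congr_deriv ?_
    rw [macdonaldK_mul_I_sub_one, Complex.add_conj, KBesselEuler, Complex.re_ofReal_mul]
    simp only [Complex.div_ofNat_re, Complex.neg_re, Complex.ofReal_re]
    field_simp
  hasDerivAt_snd u hu := by
    refine (hasDerivAt_re (hasDerivAt_mul_macdonaldK_add_one _ hu)).neg.congr_deriv ?_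
    have him := im_mul_macdonaldK ν hu
    rw [Complex.im_ofReal_mul] at him
    rw [← ofReal_KBessel ν hu]
    simp only [Complex.neg_re, neg_neg, Complex.add_re, Complex.re_ofReal_mul, Complex.ofReal_re,
      mul_assoc, Complex.I_mul_re]
    field_simp
    linear_combination -ν * him

lemma tendsto_mul_KBessel_atTop : Tendsto (fun u => u * KBessel ν u) atTop (𝓝 0) := by
  rw [tendsto_zero_iff_norm_tendsto_zero]
  refine (tendsto_zero_iff_norm_tendsto_zero.1
    (tendsto_mul_macdonaldK_atTop (ν * Complex.I))).congr' ?_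
  filter_upwards [eventually_gt_atTop 0] with u hu
  rw [← ofReal_KBessel ν hu, ← Complex.ofReal_mul, Complex.norm_real]

lemma tendsto_KBesselEuler_atTop : Tendsto (KBesselEuler ν) atTop (𝓝 0) := by
  have h := ((Complex.continuous_re.tendsto _).comp
    (tendsto_mul_macdonaldK_atTop (ν * Complex.I + 1))).neg
  rwa [Complex.zero_re, neg_zero] at h

lemma sq_norm_mul_macdonaldK {u : ℝ} (hu : 0 < u) :
    ‖u * macdonaldK (ν * Complex.I + 1) u‖ ^ 2 =
      KBesselEuler ν u ^ 2 + (ν * KBessel ν u) ^ 2 := by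
  rw [Complex.sq_norm, Complex.normSq_apply, im_mul_macdonaldK ν hu, KBesselEuler]
  ring

lemma sq_norm_Gamma_mul_I_add_one {ν : ℝ} (hν : 0 < ν) :
    ‖Complex.Gamma (ν * Complex.I + 1)‖ ^ 2 = Real.pi * ν / Real.sinh (Real.pi * ν) := by
  have hne : (ν : ℂ) * Complex.I ≠ 0 := mul_ne_zero (by exact_mod_cast hν.ne') Complex.I_ne_zero
  have hsinh : (Real.sinh (Real.pi * ν) : ℂ) ≠ 0 := by
    exact_mod_cast (Real.sinh_pos_iff.2 (mul_pos Real.pi_pos hν)).ne'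
  have hconj : (1 : ℂ) - ν * Complex.I = starRingEnd ℂ (ν * Complex.I + 1) := by
    simp [sub_eq_add_neg, add_comm]
  have hrefl := Complex.Gamma_mul_Gamma_one_sub (ν * Complex.I)
  rw [hconj, Complex.Gamma_conj, ← mul_assoc, Complex.sin_mul_I, ← Complex.ofReal_mul,
    ← Complex.ofReal_sinh, eq_div_iff (mul_ne_zero hsinh Complex.I_ne_zero)] at hrefl
  have hsq : (‖Complex.Gamma (ν * Complex.I + 1)‖ ^ 2 : ℂ) =
      Real.pi * ν / Real.sinh (Real.pi * ν) := by
    rw [← Complex.mul_conj', eq_div_iff hsinh]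
    nth_rewrite 1 [Complex.Gamma_add_one _ hne]
    linear_combination (ν : ℂ) * hrefl
  exact_mod_cast hsq

lemma norm_ofReal_cpow_mul_I_add_one {x : ℝ} (hx : 0 < x) :
    ‖(x : ℂ) ^ (ν * Complex.I + 1)‖ = x := by
  rw [Complex.norm_cpow_eq_rpow_re_of_pos hx]
  simp

/-- As `u → 0` the energy tends to `‖Γ(1 + iν)‖ ^ 2`. -/
lemma energy_KBessel_le {ν : ℝ} (hν : 0 < ν) {u : ℝ} (hu : 0 < u) :
    KBesselEuler ν u ^ 2 + (ν ^ 2 - u ^ 2) * KBessel ν u ^ 2 ≤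
      Real.pi * ν / Real.sinh (Real.pi * ν) := by
  have hre : 0 < (ν * Complex.I + 1).re := by simp
  have hlim := ((tendsto_cpow_mul_macdonaldK hre).norm).pow 2
  rw [sq_norm_Gamma_mul_I_add_one hν] at hlim
  refine ge_of_tendsto hlim ?_
  filter_upwards [Ioo_mem_nhdsGT hu] with v hv
  have hnorm : ‖2 * ((v / 2 : ℝ) : ℂ) ^ (ν * Complex.I + 1) * macdonaldK (ν * Complex.I + 1) v‖ =
      ‖v * macdonaldK (ν * Complex.I + 1) v‖ := by
    rw [norm_mul, norm_mul, norm_ofReal_cpow_mul_I_add_one ν (half_pos hv.1), Complex.norm_ofNat,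
      mul_div_cancel₀ _ two_ne_zero, norm_mul, Complex.norm_real, Real.norm_of_nonneg hv.1.le]
  rw [hnorm, sq_norm_mul_macdonaldK ν hv.1]
  refine ((isBesselPair_KBessel ν).antitoneOn_energy hv.1 hu hv.2.le).trans ?_
  nlinarith [sq_nonneg (v * KBessel ν v)]

lemma cosh_le_two_mul_sinh {y : ℝ} (hy : 2 ≤ y) : Real.cosh y ≤ 2 * Real.sinh y := by
  rw [Real.cosh_eq, Real.sinh_eq]
  linarith [Real.add_one_le_exp y, Real.exp_le_one_iff.2 (by linarith : -y ≤ 0)]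

lemma isNormalizedBesselPair_cosh_mul_KBessel {r : ℝ} (hr : 1 ≤ r) :
    IsNormalizedBesselPair (2 * r) (fun u => Real.cosh (Real.pi * r) * KBessel (2 * r) u)
      (fun u => Real.cosh (Real.pi * r) * KBesselEuler (2 * r) u) where
  hasDerivAt_fst u hu := (((isBesselPair_KBessel _).hasDerivAt_fst u hu).const_mul
    (Real.cosh (Real.pi * r))).congr_deriv (by ring)
  hasDerivAt_snd u hu := (((isBesselPair_KBessel _).hasDerivAt_snd u hu).const_mul
    (Real.cosh (Real.pi * r))).congr_deriv (by ring)
  tendsto_mul_fst := by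
    simpa [mul_left_comm] using
      (tendsto_mul_KBessel_atTop (2 * r)).const_mul (Real.cosh (Real.pi * r))
  tendsto_snd := by
    simpa using (tendsto_KBesselEuler_atTop (2 * r)).const_mul (Real.cosh (Real.pi * r))
  energy_le u hu := by
    set y := Real.pi * r with hy
    have hpi := Real.pi_gt_three
    have hcosh : Real.cosh y ≤ 2 * Real.sinh y := cosh_le_two_mul_sinh (by nlinarith)
    have hsinh : 0 < Real.sinh y := by linarith [Real.cosh_pos y]
    calc _ = Real.cosh y ^ 2 * (KBesselEuler (2 * r) u ^ 2
          + ((2 * r) ^ 2 - u ^ 2) * KBessel (2 * r) u ^ 2) := by ring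
      _ ≤ Real.cosh y ^ 2 * (Real.pi * (2 * r) / Real.sinh (Real.pi * (2 * r))) := by
        gcongr
        exact energy_KBessel_le (by linarith) hu
      _ = Real.cosh y / (2 * Real.sinh y) * (2 * y) := by
        rw [show Real.pi * (2 * r) = 2 * y by rw [hy]; ring, Real.sinh_two_mul]
        have := Real.cosh_pos y
        field_simp
      _ ≤ 1 * (2 * y) := by
        gcongr
        exact (div_le_one (by positivity)).2 hcosh
      _ ≤ 4 * (2 * r) := by nlinarith [Real.pi_le_four]

end KBessel

section Recessive

namespace IsDecayingBesselPair

variable {ν : ℝ} {k p : ℝ → ℝ}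

lemma tendsto_fst (h : IsDecayingBesselPair ν k p) : Tendsto k atTop (𝓝 0) := by
  have hmul := h.tendsto_mul_fst.mul tendsto_inv_atTop_zero
  rw [mul_zero] at hmul
  refine hmul.congr' ?_
  filter_upwards [eventually_ne_atTop 0] with u hu
  field_simp

lemma mul_nonpos (h : IsDecayingBesselPair ν k p) (hν : 0 < ν) {u : ℝ} (hu : ν ≤ u) :
    k u * p u ≤ 0 := by
  have hmono : MonotoneOn (fun u => k u * p u) (Ici ν) := by
    refine monotoneOn_of_hasDerivAt_nonneg (convex_Ici ν)
      (fun v hv => (h.hasDerivAt_fst v (hν.trans_le hv)).mul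
        (h.hasDerivAt_snd v (hν.trans_le hv))) fun v hv => ?_
    have hv0 : 0 < v := hν.trans_le hv
    have hsq : 0 ≤ v ^ 2 - ν ^ 2 := sub_nonneg.2 (pow_le_pow_left₀ hν.le hv 2)
    calc 0 ≤ (p v ^ 2 + (v ^ 2 - ν ^ 2) * k v ^ 2) / v := by positivity
      _ = p v / v * p v + k v * ((v ^ 2 - ν ^ 2) * k v / v) := by ring
  have hlim := h.tendsto_fst.mul h.tendsto_snd
  rw [mul_zero] at hlim
  refine ge_of_tendsto hlim ?_
  filter_upwards [eventually_ge_atTop u] with v hv using hmono hu (hu.trans hv) hv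

lemma mul_sq_fst_le_sq_snd (h : IsDecayingBesselPair ν k p) {u : ℝ} (hu : 0 < u) :
    (u ^ 2 - ν ^ 2) * k u ^ 2 ≤ p u ^ 2 := by
  have hlim : Tendsto (fun u => p u ^ 2 + (ν ^ 2 - u ^ 2) * k u ^ 2) atTop (𝓝 0) := by
    have := ((h.tendsto_snd.pow 2).add ((h.tendsto_fst.pow 2).const_mul (ν ^ 2))).sub
      (h.tendsto_mul_fst.pow 2)
    simp only [ne_eq, OfNat.ofNat_ne_zero, not_false_eq_true, zero_pow, mul_zero, add_zero,
      sub_zero] at this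
    exact this.congr fun u => by ring
  have hnonneg : 0 ≤ p u ^ 2 + (ν ^ 2 - u ^ 2) * k u ^ 2 := by
    refine le_of_tendsto hlim ?_
    filter_upwards [eventually_ge_atTop u] with v hv
      using h.antitoneOn_energy hu (hu.trans_le hv) hv
  linarith

lemma antitoneOn_sq_fst (h : IsDecayingBesselPair ν k p) (hν : 0 < ν) :
    AntitoneOn (fun u => k u ^ 2) (Ici ν) := by
  refine antitoneOn_of_hasDerivAt_nonpos (convex_Ici ν)
    (fun v hv => (h.hasDerivAt_fst v (hν.trans_le hv)).pow 2) fun v hv => ?_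
  have hv0 : 0 < v := hν.trans_le hv
  rw [show ((2 : ℕ) : ℝ) * k v ^ (2 - 1) * (p v / v) = 2 * (k v * p v) / v by norm_num; ring]
  exact div_nonpos_of_nonpos_of_nonneg (by linarith [h.mul_nonpos hν hv]) hv0.le

lemma antitoneOn_sq_snd (h : IsDecayingBesselPair ν k p) (hν : 0 < ν) :
    AntitoneOn (fun u => p u ^ 2) (Ici ν) := by
  refine antitoneOn_of_hasDerivAt_nonpos (convex_Ici ν)
    (fun v hv => (h.hasDerivAt_snd v (hν.trans_le hv)).pow 2) fun v hv => ?_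
  have hv0 : 0 < v := hν.trans_le hv
  have hsq : 0 ≤ v ^ 2 - ν ^ 2 := sub_nonneg.2 (pow_le_pow_left₀ hν.le hv 2)
  rw [show ((2 : ℕ) : ℝ) * p v ^ (2 - 1) * ((v ^ 2 - ν ^ 2) * k v / v) =
    2 * (v ^ 2 - ν ^ 2) / v * (k v * p v) by norm_num; ring]
  exact mul_nonpos_of_nonneg_of_nonpos (by positivity) (h.mul_nonpos hν hv)

/-- A zero of `k` beyond the turning point would force `k = 0` from there on, since `k ^ 2`
decreases. -/
lemma fst_mul_fst_nonneg (h : IsDecayingBesselPair ν k p) (hν : 0 < ν) {u v : ℝ} (hu : ν ≤ u)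
    (huv : u ≤ v) : 0 ≤ k u * k v := by
  by_contra! hneg
  have hcont : ContinuousOn k (uIcc u v) :=
    h.continuousOn_fst.mono fun w hw => hν.trans_le (hu.trans (uIcc_of_le huv ▸ hw).1)
  have hzero : (0 : ℝ) ∈ uIcc (k u) (k v) := by
    rcases mul_neg_iff.1 hneg with hs | hs
    · exact mem_uIcc.2 (Or.inr ⟨hs.2.le, hs.1.le⟩)
    · exact mem_uIcc.2 (Or.inl ⟨hs.1.le, hs.2.le⟩)
  obtain ⟨w, hw, hkw⟩ := intermediate_value_uIcc hcont hzero
  rw [uIcc_of_le huv] at hw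
  have hle := h.antitoneOn_sq_fst hν (hu.trans hw.1) (hu.trans huv) hw.2
  simp only [hkw, ne_eq, OfNat.ofNat_ne_zero, not_false_eq_true, zero_pow] at hle
  have hkv : k v = 0 := pow_eq_zero_iff two_ne_zero |>.1 (le_antisymm hle (sq_nonneg _))
  simp [hkv] at hneg

lemma exists_abs_fst_eq (h : IsDecayingBesselPair ν k p) (hν : 0 < ν) :
    ∃ σ : ℝ, |σ| = 1 ∧ ∀ u, ν ≤ u → |k u| = σ * k u := by
  by_cases hneg : ∃ w, ν ≤ w ∧ k w < 0
  · obtain ⟨w, hw, hkw⟩ := hneg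
    refine ⟨-1, by simp, fun u hu => ?_⟩
    have hnonneg : 0 ≤ k w * k u := by
      rcases le_total u w with huw | hwu
      · exact mul_comm (k u) (k w) ▸ h.fst_mul_fst_nonneg hν hu huw
      · exact h.fst_mul_fst_nonneg hν hw hwu
    rw [abs_of_nonpos (nonpos_of_mul_nonneg_right hnonneg hkw), neg_one_mul]
  · push Not at hneg
    exact ⟨1, abs_one, fun u hu => by rw [abs_of_nonneg (hneg u hu), one_mul]⟩

end IsDecayingBesselPair

/-- The phase `∫ √(t ^ 2 - ν ^ 2) dt / t` over `[ν, u]` of the WKB approximation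
`exp (-wkbPhase ν u)` to `K_{iν}(u)` beyond the turning point. -/
noncomputable def wkbPhase (ν u : ℝ) : ℝ :=
  √(u ^ 2 - ν ^ 2) - ν * Real.arctan (√(u ^ 2 - ν ^ 2) / ν)

lemma continuous_wkbPhase (ν : ℝ) : Continuous (wkbPhase ν) := by
  have hsqrt : Continuous fun u : ℝ => √(u ^ 2 - ν ^ 2) := by fun_prop
  exact hsqrt.sub ((Real.continuous_arctan.comp (hsqrt.div_const ν)).const_mul ν)

lemma wkbPhase_self (ν : ℝ) : wkbPhase ν ν = 0 := by simp [wkbPhase]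

lemma hasDerivAt_wkbPhase {ν u : ℝ} (hν : 0 < ν) (hu : ν < u) :
    HasDerivAt (wkbPhase ν) (√(u ^ 2 - ν ^ 2) / u) u := by
  have hu0 : 0 < u := hν.trans hu
  have hpos : 0 < u ^ 2 - ν ^ 2 := sub_pos.2 (pow_lt_pow_left₀ hu hν.le two_ne_zero)
  have : 0 < √(u ^ 2 - ν ^ 2) := Real.sqrt_pos.2 hpos
  have hsq : √(u ^ 2 - ν ^ 2) ^ 2 = u ^ 2 - ν ^ 2 := Real.sq_sqrt hpos.le
  have hsqrt : HasDerivAt (fun u : ℝ => √(u ^ 2 - ν ^ 2)) (u / √(u ^ 2 - ν ^ 2)) u := by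
    refine ((((hasDerivAt_id u).fun_pow 2).sub_const (ν ^ 2)).sqrt hpos.ne').congr_deriv ?_
    simp only [id]
    field_simp
    norm_num
  refine (hsqrt.sub ((hsqrt.div_const ν).arctan.const_mul ν)).congr_deriv ?_
  have hone : 1 + (√(u ^ 2 - ν ^ 2) / ν) ^ 2 = u ^ 2 / ν ^ 2 := by
    field_simp
    linarith
  rw [hone]
  field_simp
  linarith

lemma sqrt_five_half_sub_arctan_ge : 27 / 100 ≤ √5 / 2 - Real.arctan (√5 / 2) := by
  have hsqrt : 2.236 ≤ √5 := Real.le_sqrt_of_sq_le (by norm_num)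
  have hmono : MonotoneOn (fun w : ℝ => w / 2 - Real.arctan w) (Ici 1) := by
    refine monotoneOn_of_hasDerivAt_nonneg (convex_Ici 1)
      (fun w _ => ((hasDerivAt_id w).div_const 2).sub (Real.hasDerivAt_arctan w)) fun w hw => ?_
    have hw1 : (1 : ℝ) ≤ w := hw
    rw [sub_nonneg, div_le_div_iff₀ (by positivity) two_pos]
    nlinarith
  have h := hmono self_mem_Ici (show (1 : ℝ) ≤ √5 / 2 by linarith) (by linarith)
  simp only [Real.arctan_one] at h
  linarith [Real.pi_lt_d2]

lemma wkbPhase_three_half_mul_ge {ν : ℝ} (hν : 0 < ν) :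
    27 / 100 * ν ≤ wkbPhase ν (3 / 2 * ν) := by
  have hsqrt : √((3 / 2 * ν) ^ 2 - ν ^ 2) = √5 / 2 * ν := by
    rw [show (3 / 2 * ν) ^ 2 - ν ^ 2 = 5 * (ν / 2) ^ 2 by ring, Real.sqrt_mul (by norm_num),
      Real.sqrt_sq (by positivity)]
    ring
  rw [wkbPhase, hsqrt, mul_div_cancel_right₀ _ hν.ne']
  nlinarith [sqrt_five_half_sub_arctan_ge]

namespace IsDecayingBesselPair

variable {ν : ℝ} {k p : ℝ → ℝ}

lemma antitoneOn_sq_fst_mul_exp_wkbPhase (h : IsDecayingBesselPair ν k p) (hν : 0 < ν) :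
    AntitoneOn (fun u => k u ^ 2 * Real.exp (2 * wkbPhase ν u)) (Ici ν) := by
  refine antitoneOn_of_hasDerivWithinAt_nonpos (convex_Ici ν)
    (f' := fun v => 2 * (k v * p v + √(v ^ 2 - ν ^ 2) * k v ^ 2) / v
      * Real.exp (2 * wkbPhase ν v)) ?_ ?_ ?_
  · exact ((h.continuousOn_fst.mono (Ici_subset_Ioi.2 hν)).pow 2).mul
      (Real.continuous_exp.comp ((continuous_wkbPhase ν).const_mul 2)).continuousOn
  · intro v hv
    rw [interior_Ici, mem_Ioi] at hv
    have hv0 : 0 < v := hν.trans hv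
    refine (((h.hasDerivAt_fst v hv0).fun_pow 2).fun_mul
      (((hasDerivAt_wkbPhase hν hv).const_mul 2).exp)).congr_deriv ?_ |>.hasDerivWithinAt
    norm_num
    field_simp
  · intro v hv
    rw [interior_Ici, mem_Ioi] at hv
    have hpos : 0 ≤ v ^ 2 - ν ^ 2 := sub_nonneg.2 (pow_le_pow_left₀ hν.le hv.le 2)
    have hroot : √(v ^ 2 - ν ^ 2) * k v ^ 2 ≤ -(k v * p v) := by
      refine le_of_sq_le_sq ?_ (neg_nonneg.2 (h.mul_nonpos hν hv.le))
      calc (√(v ^ 2 - ν ^ 2) * k v ^ 2) ^ 2 = (v ^ 2 - ν ^ 2) * k v ^ 2 * k v ^ 2 := by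
            rw [mul_pow, Real.sq_sqrt hpos]; ring
        _ ≤ p v ^ 2 * k v ^ 2 := by
            gcongr
            exact h.mul_sq_fst_le_sq_snd (hν.trans hv)
        _ = (-(k v * p v)) ^ 2 := by ring
    exact mul_nonpos_of_nonpos_of_nonneg
      (div_nonpos_of_nonpos_of_nonneg (by linarith) (hν.trans hv).le) (Real.exp_pos _).le

lemma abs_fst_le_exp (h : IsDecayingBesselPair ν k p) (hν : 0 < ν) {u : ℝ}
    (hu : 3 / 2 * ν ≤ u) : |k u| ≤ |k ν| * Real.exp (-(27 / 100 * ν)) := by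
  have hmid : ν ≤ 3 / 2 * ν := by linarith
  have hanti := h.antitoneOn_sq_fst_mul_exp_wkbPhase hν self_mem_Ici hmid hmid
  simp only [wkbPhase_self, mul_zero, Real.exp_zero, mul_one] at hanti
  refine abs_le_of_sq_le_sq ?_ (by positivity)
  calc k u ^ 2 ≤ k (3 / 2 * ν) ^ 2 := h.antitoneOn_sq_fst hν hmid (hmid.trans hu) hu
    _ = k (3 / 2 * ν) ^ 2 * Real.exp (2 * (27 / 100 * ν)) * Real.exp (-(27 / 100 * ν)) ^ 2 := by
      rw [mul_assoc, ← Real.exp_nat_mul, ← Real.exp_add]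
      simp
    _ ≤ k (3 / 2 * ν) ^ 2 * Real.exp (2 * wkbPhase ν (3 / 2 * ν))
        * Real.exp (-(27 / 100 * ν)) ^ 2 := by
      gcongr
      exact wkbPhase_three_half_mul_ge hν
    _ ≤ k ν ^ 2 * Real.exp (-(27 / 100 * ν)) ^ 2 := by gcongr
    _ = (|k ν| * Real.exp (-(27 / 100 * ν))) ^ 2 := by rw [mul_pow, sq_abs]

end IsDecayingBesselPair

end Recessive

section TurningPoint

lemma abs_sub_le_sub_of_abs_deriv_le {s : Set ℝ} (hs : Convex ℝ s) {f f' g g' : ℝ → ℝ}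
    (hf : ∀ x ∈ s, HasDerivAt f (f' x) x) (hg : ∀ x ∈ s, HasDerivAt g (g' x) x)
    (hfg : ∀ x ∈ s, |f' x| ≤ g' x) {x y : ℝ} (hx : x ∈ s) (hy : y ∈ s) (hxy : x ≤ y) :
    |f y - f x| ≤ g y - g x := by
  have hsub := monotoneOn_of_hasDerivAt_nonneg hs (fun z hz => (hg z hz).fun_sub (hf z hz))
    (fun z hz => sub_nonneg.2 ((le_abs_self _).trans (hfg z hz))) hx hy hxy
  have hadd := monotoneOn_of_hasDerivAt_nonneg hs (fun z hz => (hg z hz).fun_add (hf z hz))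
    (fun z hz => by linarith [neg_le_abs (f' z), hfg z hz]) hx hy hxy
  rw [abs_le]
  constructor <;> linarith

/-- The amplitude `(ν ^ 2 - u ^ 2) ^ (-1/4)` of the WKB approximation to `K_{iν}(u)` before the
turning point, with `ν = ρ ^ 3`, regularised on the scale `ρ = ν ^ (1/3)` of the transition
region. -/
noncomputable def turningAmplitude (ρ u : ℝ) : ℝ :=
  (3 * ρ ^ 4 + (ρ ^ 3) ^ 2 - u ^ 2) ^ (-(1 / 4) : ℝ)

section Amplitude

variable {ρ u : ℝ}

lemma three_mul_pow_four_le (hu : u ∈ Ioc 0 (ρ ^ 3)) :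
    3 * ρ ^ 4 ≤ 3 * ρ ^ 4 + (ρ ^ 3) ^ 2 - u ^ 2 := by
  linarith [pow_le_pow_left₀ hu.1.le hu.2 2]

lemma turningAmplitude_base_pos (hρ : 0 < ρ) (hu : u ∈ Ioc 0 (ρ ^ 3)) :
    0 < 3 * ρ ^ 4 + (ρ ^ 3) ^ 2 - u ^ 2 :=
  (by positivity : 0 < 3 * ρ ^ 4).trans_le (three_mul_pow_four_le hu)

lemma turningAmplitude_pos (hρ : 0 < ρ) (hu : u ∈ Ioc 0 (ρ ^ 3)) : 0 < turningAmplitude ρ u :=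
  Real.rpow_pos_of_pos (turningAmplitude_base_pos hρ hu) _

lemma turningAmplitude_pow_four_mul (hρ : 0 < ρ) (hu : u ∈ Ioc 0 (ρ ^ 3)) :
    turningAmplitude ρ u ^ 4 * (3 * ρ ^ 4 + (ρ ^ 3) ^ 2 - u ^ 2) = 1 := by
  have hbase := turningAmplitude_base_pos hρ hu
  rw [turningAmplitude, ← Real.rpow_mul_natCast hbase.le,
    show (-(1 / 4) : ℝ) * (4 : ℕ) = -1 by norm_num, Real.rpow_neg_one]
  exact inv_mul_cancel₀ hbase.ne'

lemma hasDerivAt_turningAmplitude (hρ : 0 < ρ) (hu : u ∈ Ioc 0 (ρ ^ 3)) :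
    HasDerivAt (turningAmplitude ρ) (u / 2 * turningAmplitude ρ u ^ 5) u := by
  have hbase := turningAmplitude_base_pos hρ hu
  refine ((((hasDerivAt_id u).fun_pow 2).const_sub (3 * ρ ^ 4 + (ρ ^ 3) ^ 2)).rpow_const
    (p := -(1 / 4)) (Or.inl hbase.ne')).congr_deriv ?_
  rw [turningAmplitude, ← Real.rpow_mul_natCast hbase.le,
    show (-(1 / 4) : ℝ) - 1 = -(1 / 4) * (5 : ℕ) by norm_num]
  simp only [id]
  push_cast
  ring

lemma pow_four_mul_turningAmplitude_le (hρ : 0 < ρ) (hu : u ∈ Ioc 0 (ρ ^ 3)) :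
    3 * (ρ * turningAmplitude ρ u) ^ 4 ≤ 1 := by
  have hpos := turningAmplitude_pos hρ hu
  calc 3 * (ρ * turningAmplitude ρ u) ^ 4 = turningAmplitude ρ u ^ 4 * (3 * ρ ^ 4) := by ring
    _ ≤ turningAmplitude ρ u ^ 4 * (3 * ρ ^ 4 + (ρ ^ 3) ^ 2 - u ^ 2) := by
      gcongr
      exact three_mul_pow_four_le hu
    _ = 1 := turningAmplitude_pow_four_mul hρ hu

lemma turningAmplitude_le_inv (hρ : 0 < ρ) (hu : u ∈ Ioc 0 (ρ ^ 3)) :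
    turningAmplitude ρ u ≤ ρ⁻¹ := by
  have hpow : (ρ * turningAmplitude ρ u) ^ 4 ≤ 1 ^ 4 := by
    linarith [pow_four_mul_turningAmplitude_le hρ hu,
      (by positivity : 0 ≤ (ρ * turningAmplitude ρ u) ^ 4)]
  rw [← one_div, le_div_iff₀' hρ]
  exact le_of_pow_le_pow_left₀ four_ne_zero zero_le_one hpow

lemma three_mul_sq_mul_turningAmplitude_le (hρ : 0 < ρ) (hu : u ∈ Ioc 0 (ρ ^ 3)) :
    3 * (u ^ 2 * turningAmplitude ρ u ^ 4) ≤ ρ ^ 2 := by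
  have hsq : u ^ 2 ≤ (ρ ^ 3) ^ 2 := pow_le_pow_left₀ hu.1.le hu.2 2
  calc 3 * (u ^ 2 * turningAmplitude ρ u ^ 4)
      ≤ 3 * ((ρ ^ 3) ^ 2 * turningAmplitude ρ u ^ 4) := by gcongr
    _ = ρ ^ 2 * (3 * (ρ * turningAmplitude ρ u) ^ 4) := by ring
    _ ≤ ρ ^ 2 * 1 := by
      gcongr
      exact pow_four_mul_turningAmplitude_le hρ hu
    _ = ρ ^ 2 := mul_one _

end Amplitude

/-- The energy `Z ^ 2 * (p ^ 2 + (ν ^ 2 - u ^ 2) * k ^ 2)`, weighted with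
`Z = turningAmplitude ρ u` and `ν = ρ ^ 3`, plus the lower order terms that cancel the main terms
of its derivative, so that it decreases up to the turning point. -/
noncomputable def amendedEnergy (ρ : ℝ) (k p : ℝ → ℝ) (u : ℝ) : ℝ :=
  p u ^ 2 * turningAmplitude ρ u ^ 2 - u ^ 2 * turningAmplitude ρ u ^ 6 * (k u * p u) +
    (((ρ ^ 3) ^ 2 - u ^ 2) * turningAmplitude ρ u ^ 2 + u ^ 2 * turningAmplitude ρ u ^ 6 +
      3 / 2 * (u ^ 4 * turningAmplitude ρ u ^ 10)) * k u ^ 2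

section AmendedEnergy

variable {ρ : ℝ} {k p : ℝ → ℝ}

lemma hasDerivAt_amendedEnergy (h : IsBesselPair (ρ ^ 3) k p) (hρ : 0 < ρ) {u : ℝ}
    (hu : u ∈ Ioc 0 (ρ ^ 3)) :
    HasDerivAt (amendedEnergy ρ k p) (2 * u * turningAmplitude ρ u ^ 6 * k u ^ 2 *
      (1 + 9 / 2 * (u ^ 2 * turningAmplitude ρ u ^ 4) +
        15 / 4 * (u ^ 2 * turningAmplitude ρ u ^ 4) ^ 2 - 3 * ρ ^ 4)) u := by
  have hu0 : 0 < u := hu.1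
  have hZ := hasDerivAt_turningAmplitude hρ hu
  have hk := h.hasDerivAt_fst u hu0
  have hp := h.hasDerivAt_snd u hu0
  have hid := hasDerivAt_id u
  refine ((((hp.fun_pow 2).fun_mul (hZ.fun_pow 2)).fun_sub
    (((hid.fun_pow 2).fun_mul (hZ.fun_pow 6)).fun_mul (hk.fun_mul hp))).fun_add
    ((((((hid.fun_pow 2).const_sub ((ρ ^ 3) ^ 2)).fun_mul (hZ.fun_pow 2)).fun_add
      ((hid.fun_pow 2).fun_mul (hZ.fun_pow 6))).fun_add
      (((hid.fun_pow 4).fun_mul (hZ.fun_pow 10)).const_mul (3 / 2))).fun_mul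
      (hk.fun_pow 2))).congr_deriv ?_
  have hZ4 := turningAmplitude_pow_four_mul hρ hu
  simp only [id]
  field_simp
  norm_num
  linear_combination 32 * turningAmplitude ρ u ^ 2 * u ^ 2 * k u ^ 2 * hZ4

lemma antitoneOn_amendedEnergy (h : IsBesselPair (ρ ^ 3) k p) (hρ : 1 ≤ ρ) :
    AntitoneOn (amendedEnergy ρ k p) (Ioc 0 (ρ ^ 3)) := by
  have hρ0 : 0 < ρ := one_pos.trans_le hρ
  refine antitoneOn_of_hasDerivAt_nonpos (convex_Ioc 0 (ρ ^ 3))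
    (fun u hu => hasDerivAt_amendedEnergy h hρ0 hu) fun u hu => ?_
  have hu0 : 0 < u := hu.1
  have hZ := turningAmplitude_pos hρ0 hu
  refine mul_nonpos_of_nonneg_of_nonpos (by positivity) ?_
  set y := u ^ 2 * turningAmplitude ρ u ^ 4
  have hy : 3 * y ≤ ρ ^ 2 := three_mul_sq_mul_turningAmplitude_le hρ0 hu
  have hy0 : 0 ≤ y := by positivity
  have hρ2 : 1 ≤ ρ ^ 2 := one_le_pow₀ hρ
  nlinarith [hy0]

lemma amendedEnergy_three_sixteenths_le (h : IsNormalizedBesselPair (ρ ^ 3) k p) (hρ : 1 ≤ ρ) :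
    amendedEnergy ρ k p (3 / 16 * ρ ^ 3) ≤ 7 := by
  have hρ0 : 0 < ρ := one_pos.trans_le hρ
  have hν : 1 ≤ ρ ^ 3 := one_le_pow₀ hρ
  have hu0 : 0 < 3 / 16 * ρ ^ 3 := by positivity
  have hu : 3 / 16 * ρ ^ 3 ∈ Ioc 0 (ρ ^ 3) := ⟨hu0, by linarith⟩
  have hZ4 := turningAmplitude_pow_four_mul hρ0 hu
  have hZ := turningAmplitude_pos hρ0 hu
  have henergy := h.energy_le _ hu0
  unfold amendedEnergy
  set Z := turningAmplitude ρ (3 / 16 * ρ ^ 3)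
  set K := k (3 / 16 * ρ ^ 3)
  set P := p (3 / 16 * ρ ^ 3)
  set ν := ρ ^ 3
  have hQZ : 247 / 256 * (ν * Z ^ 2) ^ 2 ≤ 1 := by
    linarith [(by positivity : 0 ≤ Z ^ 4 * (3 * ρ ^ 4))]
  have hνZ : ν * Z ^ 2 ≤ 51 / 50 := abs_le_of_sq_le_sq' (by linarith) (by norm_num) |>.2
  set y := (3 / 16 * ν) ^ 2 * Z ^ 4 with hy_def
  have hy : y ≤ 1 / 20 := by rw [hy_def]; linarith
  have hy0 : 0 ≤ y := by positivity
  have hweighted : (P * Z) ^ 2 + 247 / 256 * ν ^ 2 * (K * Z) ^ 2 ≤ 102 / 25 := by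
    linarith [mul_le_mul_of_nonneg_right henergy (sq_nonneg Z)]
  have hKZ : (K * Z) ^ 2 ≤ 5 := by
    have : (K * Z) ^ 2 ≤ ν ^ 2 * (K * Z) ^ 2 :=
      le_mul_of_one_le_left (sq_nonneg _) (one_le_pow₀ hν)
    linarith [sq_nonneg (P * Z)]
  have hcross : -(y * (K * Z) * (P * Z)) ≤ ((P * Z) ^ 2 + (y * (K * Z)) ^ 2) / 2 := by
    linarith [sq_nonneg (P * Z + y * (K * Z))]
  have hyKZ : (y + 2 * y ^ 2) * (K * Z) ^ 2 ≤ (1 / 20 + 2 * (1 / 20) ^ 2) * 5 := by gcongr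
  calc P ^ 2 * Z ^ 2 - (3 / 16 * ν) ^ 2 * Z ^ 6 * (K * P) + ((ν ^ 2 - (3 / 16 * ν) ^ 2) * Z ^ 2 +
        (3 / 16 * ν) ^ 2 * Z ^ 6 + 3 / 2 * ((3 / 16 * ν) ^ 4 * Z ^ 10)) * K ^ 2
      = (P * Z) ^ 2 - y * (K * Z) * (P * Z) + 247 / 256 * ν ^ 2 * (K * Z) ^ 2
        + (y + 3 / 2 * y ^ 2) * (K * Z) ^ 2 := by rw [hy_def]; ring
    _ ≤ 7 := by linarith [mul_nonneg (sq_nonneg ν) (sq_nonneg (K * Z))]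

lemma amendedEnergy_le (h : IsNormalizedBesselPair (ρ ^ 3) k p) (hρ : 1 ≤ ρ) {u : ℝ}
    (hu : u ∈ Icc (3 / 16 * ρ ^ 3) (ρ ^ 3)) :
    (p u * turningAmplitude ρ u) ^ 2 / 2 +
      ((ρ ^ 3) ^ 2 - u ^ 2 + (u ^ 2 * turningAmplitude ρ u ^ 4) ^ 2) *
        (k u * turningAmplitude ρ u) ^ 2 ≤ 7 := by
  have hρ3 : 0 < ρ ^ 3 := pow_pos (one_pos.trans_le hρ) 3
  have hanti := antitoneOn_amendedEnergy h.toIsBesselPair hρ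
    ⟨by positivity, by linarith⟩ ⟨hu.1.trans_lt' (by positivity), hu.2⟩ hu.1
  refine le_trans ?_ (hanti.trans (amendedEnergy_three_sixteenths_le h hρ))
  unfold amendedEnergy
  set Z := turningAmplitude ρ u
  linarith [sq_nonneg (p u * Z - u ^ 2 * Z ^ 5 * k u),
    (by positivity : 0 ≤ u ^ 2 * Z ^ 6 * k u ^ 2)]

end AmendedEnergy

section Bounds

variable {ρ : ℝ} {k p : ℝ → ℝ}

lemma mem_Ioc_of_mem_Icc (hρ : 0 < ρ) {u : ℝ} (hu : u ∈ Icc (3 / 16 * ρ ^ 3) (ρ ^ 3)) :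
    u ∈ Ioc 0 (ρ ^ 3) :=
  ⟨hu.1.trans_lt' (by positivity), hu.2⟩

lemma abs_snd_mul_turningAmplitude_le (h : IsNormalizedBesselPair (ρ ^ 3) k p) (hρ : 1 ≤ ρ)
    {u : ℝ} (hu : u ∈ Icc (3 / 16 * ρ ^ 3) (ρ ^ 3)) : |p u| * turningAmplitude ρ u ≤ 4 := by
  have hρ0 : 0 < ρ := one_pos.trans_le hρ
  have hu' := mem_Ioc_of_mem_Icc hρ0 hu
  have henergy := amendedEnergy_le h hρ hu
  have hZ := turningAmplitude_pos hρ0 hu'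
  set Z := turningAmplitude ρ u
  have hQ : 0 ≤ (ρ ^ 3) ^ 2 - u ^ 2 := sub_nonneg.2 (pow_le_pow_left₀ hu'.1.le hu.2 2)
  have hrest : 0 ≤ ((ρ ^ 3) ^ 2 - u ^ 2 + (u ^ 2 * Z ^ 4) ^ 2) * (k u * Z) ^ 2 := by positivity
  have hsq : (|p u| * Z) ^ 2 ≤ 4 ^ 2 := by
    rw [mul_pow, sq_abs, ← mul_pow]
    linarith
  exact abs_le_of_sq_le_sq' hsq (by norm_num) |>.2

/-- Away from the turning point `ν ^ 2 - u ^ 2` dominates; close to it the second summand is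
comparable to `ρ ^ 4`. -/
lemma turningAmplitude_base_le (hρ : 0 < ρ) {u : ℝ} (hu : u ∈ Icc (3 / 16 * ρ ^ 3) (ρ ^ 3)) :
    3 * ρ ^ 4 + (ρ ^ 3) ^ 2 - u ^ 2 ≤
      200000 * ((ρ ^ 3) ^ 2 - u ^ 2 + (u ^ 2 * turningAmplitude ρ u ^ 4) ^ 2) := by
  have hu' := mem_Ioc_of_mem_Icc hρ hu
  have hQ : 0 ≤ (ρ ^ 3) ^ 2 - u ^ 2 := sub_nonneg.2 (pow_le_pow_left₀ hu'.1.le hu.2 2)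
  have hZ4 := turningAmplitude_pow_four_mul hρ hu'
  set Z := turningAmplitude ρ u
  rcases le_total (3 * ρ ^ 4) ((ρ ^ 3) ^ 2 - u ^ 2) with hfar | hnear
  · linarith [sq_nonneg (u ^ 2 * Z ^ 4)]
  · have hZ_lower : 1 ≤ Z ^ 4 * (6 * ρ ^ 4) := by
      rw [← hZ4]
      gcongr
      linarith
    have hu4 : (3 / 16 * ρ ^ 3) ^ 4 ≤ u ^ 4 := by
      gcongr
      exact hu.1
    have hmain : (3 / 16) ^ 4 / 36 * ρ ^ 4 ≤ (u ^ 2 * Z ^ 4) ^ 2 := by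
      calc (3 / 16) ^ 4 / 36 * ρ ^ 4 ≤ (3 / 16) ^ 4 / 36 * ρ ^ 4 * (Z ^ 4 * (6 * ρ ^ 4)) ^ 2 :=
            le_mul_of_one_le_right (by positivity) (one_le_pow₀ hZ_lower)
        _ = (3 / 16 * ρ ^ 3) ^ 4 * Z ^ 8 := by ring
        _ ≤ u ^ 4 * Z ^ 8 := by gcongr
        _ = (u ^ 2 * Z ^ 4) ^ 2 := by ring
    linarith

lemma abs_fst_le_turningAmplitude (h : IsNormalizedBesselPair (ρ ^ 3) k p) (hρ : 1 ≤ ρ)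
    {u : ℝ} (hu : u ∈ Icc (3 / 16 * ρ ^ 3) (ρ ^ 3)) : |k u| ≤ 1200 * turningAmplitude ρ u := by
  have hρ0 : 0 < ρ := one_pos.trans_le hρ
  have hu' := mem_Ioc_of_mem_Icc hρ0 hu
  have henergy := amendedEnergy_le h hρ hu
  have hbase := turningAmplitude_base_le hρ0 hu
  have hZ4 := turningAmplitude_pow_four_mul hρ0 hu'
  have hZ := turningAmplitude_pos hρ0 hu'
  set Z := turningAmplitude ρ u
  refine abs_le_of_sq_le_sq ?_ (by positivity)
  calc k u ^ 2 = (k u * Z) ^ 2 * (3 * ρ ^ 4 + (ρ ^ 3) ^ 2 - u ^ 2) * Z ^ 2 := by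
        linear_combination -(k u ^ 2) * hZ4
    _ ≤ (k u * Z) ^ 2 *
          (200000 * ((ρ ^ 3) ^ 2 - u ^ 2 + (u ^ 2 * Z ^ 4) ^ 2)) * Z ^ 2 := by gcongr
    _ = 200000 * (((ρ ^ 3) ^ 2 - u ^ 2 + (u ^ 2 * Z ^ 4) ^ 2) * (k u * Z) ^ 2) * Z ^ 2 := by ring
    _ ≤ 200000 * 7 * Z ^ 2 := by
      gcongr
      linarith [sq_nonneg (p u * Z)]
    _ ≤ (1200 * Z) ^ 2 := by linarith [sq_nonneg Z]

lemma abs_fst_turningPoint_le (h : IsNormalizedBesselPair (ρ ^ 3) k p) (hρ : 1 ≤ ρ) :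
    |k (ρ ^ 3)| ≤ 1200 / ρ := by
  have hρ0 : 0 < ρ := one_pos.trans_le hρ
  have hρ3 : 0 < ρ ^ 3 := by positivity
  have hk := abs_fst_le_turningAmplitude h hρ ⟨by linarith, le_rfl⟩
  have hZ := turningAmplitude_le_inv hρ0 ⟨hρ3, le_rfl⟩
  rw [div_eq_mul_inv]
  linarith

lemma abs_snd_turningPoint_le (h : IsNormalizedBesselPair (ρ ^ 3) k p) (hρ : 1 ≤ ρ) :
    |p (ρ ^ 3)| ≤ 8 * ρ := by
  have hρ0 : 0 < ρ := one_pos.trans_le hρ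
  have hρ3 : 0 < ρ ^ 3 := by positivity
  have hp := abs_snd_mul_turningAmplitude_le h hρ ⟨by linarith, le_rfl⟩
  have hZ4 := turningAmplitude_pow_four_mul hρ0 ⟨hρ3, le_rfl⟩
  have hZ := turningAmplitude_pos hρ0 ⟨hρ3, le_rfl⟩
  set Z := turningAmplitude ρ (ρ ^ 3)
  have hZ_lower : 1 ≤ 2 * ρ * Z := by
    by_contra! hlt
    have : (2 * ρ * Z) ^ 4 < 1 := pow_lt_one₀ (by positivity) hlt four_ne_zero
    linarith
  calc |p (ρ ^ 3)| ≤ |p (ρ ^ 3)| * (2 * ρ * Z) :=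
        le_mul_of_one_le_right (abs_nonneg _) hZ_lower
    _ = 2 * ρ * (|p (ρ ^ 3)| * Z) := by ring
    _ ≤ 2 * ρ * 4 := by gcongr
    _ = 8 * ρ := by ring

end Bounds

section Primitive

variable {ρ : ℝ} {k p I : ℝ → ℝ}

/-- Up to lower order terms `p * Z ^ 4` is a primitive of `-k / u`. -/
lemma hasDerivAt_primitive_add (h : IsBesselPair (ρ ^ 3) k p) (hρ : 0 < ρ)
    (hI : ∀ u, 0 < u → HasDerivAt I (k u / u) u) {u : ℝ} (hu : u ∈ Ioc 0 (ρ ^ 3)) :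
    HasDerivAt (fun v => I v + p v * turningAmplitude ρ v ^ 4)
      (3 * ρ ^ 4 * turningAmplitude ρ u ^ 4 * k u / u + 2 * u * p u * turningAmplitude ρ u ^ 8)
      u := by
  have hu0 : 0 < u := hu.1
  have hZ4 := turningAmplitude_pow_four_mul hρ hu
  refine ((hI u hu0).fun_add ((h.hasDerivAt_snd u hu0).fun_mul
    ((hasDerivAt_turningAmplitude hρ hu).fun_pow 4))).congr_deriv ?_
  field_simp
  norm_num
  linear_combination -2 * k u * hZ4

lemma abs_deriv_primitive_add_le (h : IsNormalizedBesselPair (ρ ^ 3) k p) (hρ : 1 ≤ ρ) {u : ℝ}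
    (hu : u ∈ Icc (3 / 16 * ρ ^ 3) (ρ ^ 3)) :
    |3 * ρ ^ 4 * turningAmplitude ρ u ^ 4 * k u / u + 2 * u * p u * turningAmplitude ρ u ^ 8| ≤
      9 * u * turningAmplitude ρ u ^ 7 + 204800 / ρ ^ 2 * (u / 2 * turningAmplitude ρ u ^ 5) := by
  have hρ0 : 0 < ρ := one_pos.trans_le hρ
  have hu' := mem_Ioc_of_mem_Icc hρ0 hu
  have hu0 : 0 < u := hu'.1
  have hp := abs_snd_mul_turningAmplitude_le h hρ hu
  have hk := abs_fst_le_turningAmplitude h hρ hu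
  have hZ := turningAmplitude_pos hρ0 hu'
  set Z := turningAmplitude ρ u
  have hsq : (3 / 16 * ρ ^ 3) ^ 2 ≤ u ^ 2 := by
    gcongr
    exact hu.1
  have hfst : |3 * ρ ^ 4 * Z ^ 4 * k u / u| ≤ 204800 / ρ ^ 2 * (u / 2 * Z ^ 5) := by
    rw [abs_div, abs_mul, abs_of_pos hu0, abs_of_pos (by positivity : 0 < 3 * ρ ^ 4 * Z ^ 4)]
    calc 3 * ρ ^ 4 * Z ^ 4 * |k u| / u ≤ 3 * ρ ^ 4 * Z ^ 4 * (1200 * Z) / u := by gcongr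
      _ = 102400 / (ρ ^ 2 * u) * Z ^ 5 * (3 / 16 * ρ ^ 3) ^ 2 := by field_simp; norm_num
      _ ≤ 102400 / (ρ ^ 2 * u) * Z ^ 5 * u ^ 2 := by gcongr
      _ = 204800 / ρ ^ 2 * (u / 2 * Z ^ 5) := by field_simp; norm_num
  have hsnd : |2 * u * p u * Z ^ 8| ≤ 9 * u * Z ^ 7 := by
    rw [abs_mul, abs_mul, abs_of_pos (by positivity : 0 < 2 * u),
      abs_of_pos (by positivity : 0 < Z ^ 8)]
    calc 2 * u * |p u| * Z ^ 8 = 2 * u * Z ^ 7 * (|p u| * Z) := by ring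
      _ ≤ 2 * u * Z ^ 7 * 4 := by gcongr
      _ ≤ 9 * u * Z ^ 7 := by linarith [(by positivity : 0 ≤ u * Z ^ 7)]
  linarith [abs_add_le (3 * ρ ^ 4 * Z ^ 4 * k u / u) (2 * u * p u * Z ^ 8)]

lemma abs_snd_mul_turningAmplitude_pow_four_le (h : IsNormalizedBesselPair (ρ ^ 3) k p)
    (hρ : 1 ≤ ρ) {u : ℝ} (hu : u ∈ Icc (3 / 16 * ρ ^ 3) (ρ ^ 3)) :
    |p u * turningAmplitude ρ u ^ 4| ≤ 4 / ρ ^ 3 := by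
  have hρ0 : 0 < ρ := one_pos.trans_le hρ
  have hu' := mem_Ioc_of_mem_Icc hρ0 hu
  have hZ := turningAmplitude_pos hρ0 hu'
  have hZ_le := turningAmplitude_le_inv hρ0 hu'
  have hp := abs_snd_mul_turningAmplitude_le h hρ hu
  rw [abs_mul, abs_of_pos (pow_pos hZ 4)]
  calc |p u| * turningAmplitude ρ u ^ 4
      = |p u| * turningAmplitude ρ u * turningAmplitude ρ u ^ 3 := by ring
    _ ≤ 4 * ρ⁻¹ ^ 3 := by gcongr
    _ = 4 / ρ ^ 3 := by rw [inv_pow, div_eq_mul_inv]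

lemma turningAmplitude_majorant_le (hρ : 0 < ρ) {u : ℝ} (hu : u ∈ Ioc 0 (ρ ^ 3)) :
    6 * turningAmplitude ρ u ^ 3 + 204800 / ρ ^ 2 * turningAmplitude ρ u ≤ 204806 / ρ ^ 3 := by
  have hZ := turningAmplitude_pos hρ hu
  have hZ_le := turningAmplitude_le_inv hρ hu
  calc 6 * turningAmplitude ρ u ^ 3 + 204800 / ρ ^ 2 * turningAmplitude ρ u
      ≤ 6 * ρ⁻¹ ^ 3 + 204800 / ρ ^ 2 * ρ⁻¹ := by gcongr
    _ = 204806 / ρ ^ 3 := by field_simp; norm_num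

lemma abs_primitive_sub_le_of_le (h : IsNormalizedBesselPair (ρ ^ 3) k p) (hρ : 1 ≤ ρ)
    (hI : ∀ u, 0 < u → HasDerivAt I (k u / u) u) {u : ℝ}
    (hu : u ∈ Icc (3 / 16 * ρ ^ 3) (ρ ^ 3)) : |I u - I (ρ ^ 3)| ≤ 300000 / ρ ^ 3 := by
  have hρ0 : 0 < ρ := one_pos.trans_le hρ
  have hν : ρ ^ 3 ∈ Icc (3 / 16 * ρ ^ 3) (ρ ^ 3) := ⟨by linarith [pow_pos hρ0 3], le_rfl⟩
  have hmajorant : ∀ v ∈ Icc (3 / 16 * ρ ^ 3) (ρ ^ 3), HasDerivAt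
      (fun v => 6 * turningAmplitude ρ v ^ 3 + 204800 / ρ ^ 2 * turningAmplitude ρ v)
      (9 * v * turningAmplitude ρ v ^ 7 +
        204800 / ρ ^ 2 * (v / 2 * turningAmplitude ρ v ^ 5)) v := fun v hv => by
    have hZ' := hasDerivAt_turningAmplitude hρ0 (mem_Ioc_of_mem_Icc hρ0 hv)
    refine (((hZ'.fun_pow 3).const_mul 6).fun_add
      (hZ'.const_mul (204800 / ρ ^ 2))).congr_deriv ?_
    norm_num
    ring
  have hcompare := abs_sub_le_sub_of_abs_deriv_le (convex_Icc (3 / 16 * ρ ^ 3) (ρ ^ 3))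
    (fun v hv => hasDerivAt_primitive_add h.toIsBesselPair hρ0 hI (mem_Ioc_of_mem_Icc hρ0 hv))
    hmajorant (fun v hv => abs_deriv_primitive_add_le h hρ hv) hu hν hu.2
  have hg := turningAmplitude_majorant_le hρ0 (mem_Ioc_of_mem_Icc hρ0 hν)
  have hg_nonneg : 0 ≤ 6 * turningAmplitude ρ u ^ 3 + 204800 / ρ ^ 2 * turningAmplitude ρ u := by
    have hZ := turningAmplitude_pos hρ0 (mem_Ioc_of_mem_Icc hρ0 hu)
    positivity
  have hpu := abs_le.1 (abs_snd_mul_turningAmplitude_pow_four_le h hρ hu)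
  have hpν := abs_le.1 (abs_snd_mul_turningAmplitude_pow_four_le h hρ hν)
  have hsum : 204806 / ρ ^ 3 + 4 / ρ ^ 3 + 4 / ρ ^ 3 ≤ 300000 / ρ ^ 3 := by
    rw [← add_div, ← add_div]
    gcongr
    norm_num
  rw [abs_le] at *
  constructor <;> linarith

lemma abs_primitive_sub_le_of_le_add (h : IsNormalizedBesselPair (ρ ^ 3) k p) (hρ : 1 ≤ ρ)
    (hI : ∀ u, 0 < u → HasDerivAt I (k u / u) u) {u : ℝ}
    (hu : u ∈ Icc (ρ ^ 3) (ρ ^ 3 + ρ)) : |I u - I (ρ ^ 3)| ≤ 1200 / ρ ^ 3 := by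
  have hρ0 : 0 < ρ := one_pos.trans_le hρ
  have hν : 0 < ρ ^ 3 := pow_pos hρ0 3
  have hbound : ∀ v ∈ Ici (ρ ^ 3), ‖k v / v‖ ≤ 1200 / ρ ^ 4 := fun v hv => by
    have hk := (sq_le_sq.1 (h.antitoneOn_sq_fst hν self_mem_Ici hv hv)).trans
      (abs_fst_turningPoint_le h hρ)
    have hv' : ρ ^ 3 ≤ v := hv
    rw [norm_div, Real.norm_eq_abs, Real.norm_of_nonneg (hν.le.trans hv)]
    calc |k v| / v ≤ 1200 / ρ / ρ ^ 3 := by gcongr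
      _ = 1200 / ρ ^ 4 := by field_simp
  have hmvt := (convex_Ici (ρ ^ 3)).norm_image_sub_le_of_norm_hasDerivWithin_le
    (fun v hv => (hI v (hν.trans_le hv)).hasDerivWithinAt) hbound self_mem_Ici hu.1
  rw [Real.norm_eq_abs, Real.norm_of_nonneg (sub_nonneg.2 hu.1)] at hmvt
  calc |I u - I (ρ ^ 3)| ≤ 1200 / ρ ^ 4 * (u - ρ ^ 3) := hmvt
    _ ≤ 1200 / ρ ^ 4 * ρ := by
      gcongr
      linarith [hu.2]
    _ = 1200 / ρ ^ 3 := by field_simp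

/-- Beyond the transition region `|k| / u ≤ |p'| / (2 * ρ ^ 4)`, where `p` is monotone. -/
lemma abs_primitive_sub_le_of_add_le (h : IsNormalizedBesselPair (ρ ^ 3) k p) (hρ : 1 ≤ ρ)
    (hI : ∀ u, 0 < u → HasDerivAt I (k u / u) u) {u : ℝ} (hu : ρ ^ 3 + ρ ≤ u) :
    |I u - I (ρ ^ 3 + ρ)| ≤ 8 / ρ ^ 3 := by
  have hρ0 : 0 < ρ := one_pos.trans_le hρ
  have hν : 0 < ρ ^ 3 := pow_pos hρ0 3
  obtain ⟨σ, hσ, hsign⟩ := h.exists_abs_fst_eq hν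
  have hcompare := abs_sub_le_sub_of_abs_deriv_le (convex_Ici (ρ ^ 3 + ρ))
    (fun v hv => hI v (by linarith [mem_Ici.1 hv]))
    (fun v hv => (h.hasDerivAt_snd v (by linarith [mem_Ici.1 hv])).const_mul (σ / (2 * ρ ^ 4)))
    (fun v hv => by
      have hv' : ρ ^ 3 + ρ ≤ v := hv
      have hv0 : 0 < v := by linarith
      have hQ : 2 * ρ ^ 4 ≤ v ^ 2 - (ρ ^ 3) ^ 2 := by
        linarith [pow_le_pow_left₀ (by positivity) hv' 2, sq_nonneg ρ]
      rw [abs_div, abs_of_pos hv0]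
      calc |k v| / v = 2 * ρ ^ 4 * |k v| / (2 * ρ ^ 4) / v := by field_simp
        _ ≤ (v ^ 2 - (ρ ^ 3) ^ 2) * |k v| / (2 * ρ ^ 4) / v := by gcongr
        _ = σ / (2 * ρ ^ 4) * ((v ^ 2 - (ρ ^ 3) ^ 2) * k v / v) := by
          rw [hsign v (by linarith)]
          ring)
    self_mem_Ici hu hu
  have hp : ∀ v, ρ ^ 3 ≤ v → |σ * p v| ≤ 8 * ρ := fun v hv => by
    rw [abs_mul, hσ, one_mul]
    exact (sq_le_sq.1 (h.antitoneOn_sq_snd hν self_mem_Ici hv hv)).trans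
      (abs_snd_turningPoint_le h hρ)
  calc |I u - I (ρ ^ 3 + ρ)| ≤ (σ * p u - σ * p (ρ ^ 3 + ρ)) / (2 * ρ ^ 4) :=
        hcompare.trans_eq (by ring)
    _ ≤ (8 * ρ + 8 * ρ) / (2 * ρ ^ 4) := by
      gcongr
      linarith [(abs_le.1 (hp u (by linarith))).2, (abs_le.1 (hp (ρ ^ 3 + ρ) (by linarith))).1]
    _ = 8 / ρ ^ 3 := by field_simp; norm_num

end Primitive

lemma exists_eq_pow_three {ν : ℝ} (hν : 1 ≤ ν) : ∃ ρ : ℝ, 1 ≤ ρ ∧ ρ ^ 3 = ν :=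
  ⟨ν ^ (3 : ℝ)⁻¹, Real.one_le_rpow hν (by norm_num),
    Real.rpow_inv_natCast_pow (n := 3) (by linarith) (by norm_num)⟩

namespace IsNormalizedBesselPair

variable {ν : ℝ} {k p : ℝ → ℝ}

lemma abs_fst_self_le (h : IsNormalizedBesselPair ν k p) (hν : 1 ≤ ν) : |k ν| ≤ 1200 := by
  obtain ⟨ρ, hρ, rfl⟩ := exists_eq_pow_three hν
  exact (abs_fst_turningPoint_le h hρ).trans (div_le_self (by norm_num) hρ)

lemma abs_primitive_sub_le (h : IsNormalizedBesselPair ν k p) (hν : 1 ≤ ν) {I : ℝ → ℝ}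
    (hI : ∀ u, 0 < u → HasDerivAt I (k u / u) u) {u : ℝ} (hu : 3 / 16 * ν ≤ u) :
    |I u - I ν| ≤ 300000 / ν := by
  obtain ⟨ρ, hρ, rfl⟩ := exists_eq_pow_three hν
  rcases le_total u (ρ ^ 3) with hleft | hright
  · exact abs_primitive_sub_le_of_le h hρ hI ⟨hu, hleft⟩
  rcases le_total u (ρ ^ 3 + ρ) with hnear | hfar
  · refine (abs_primitive_sub_le_of_le_add h hρ hI ⟨hright, hnear⟩).trans ?_
    gcongr
    norm_num
  · calc |I u - I (ρ ^ 3)| ≤ |I u - I (ρ ^ 3 + ρ)| + |I (ρ ^ 3 + ρ) - I (ρ ^ 3)| :=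
          abs_sub_le _ _ _
      _ ≤ 8 / ρ ^ 3 + 1200 / ρ ^ 3 := by
        gcongr
        · exact abs_primitive_sub_le_of_add_le h hρ hI hfar
        · exact abs_primitive_sub_le_of_le_add h hρ hI ⟨by linarith, le_rfl⟩
      _ = 1208 / ρ ^ 3 := by ring
      _ ≤ 300000 / ρ ^ 3 := by
        gcongr
        norm_num

end IsNormalizedBesselPair

end TurningPoint

section Variation

lemma integral_abs_deriv_of_monotoneOn {f : ℝ → ℝ} (hf : ContDiff ℝ 1 f) {s t : ℝ} (hst : s ≤ t)
    (hmono : MonotoneOn f (Icc s t)) : ∫ u in s..t, |deriv f u| = f t - f s := by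
  rw [← intervalIntegral.integral_eq_sub_of_hasDerivAt
    (fun u _ => (hf.differentiable_one u).hasDerivAt)
    (hf.continuous_deriv_one.intervalIntegrable s t)]
  refine intervalIntegral.integral_congr_Ioo_of_le hst fun u hu => abs_of_nonneg ?_
  rw [← derivWithin_of_mem_nhds (Icc_mem_nhds hu.1 hu.2)]
  exact hmono.derivWithin_nonneg

lemma integral_abs_deriv_of_monotoneOn_or_antitoneOn {f : ℝ → ℝ} (hf : ContDiff ℝ 1 f) {s t : ℝ}
    (hst : s ≤ t) (hmono : MonotoneOn f (Icc s t) ∨ AntitoneOn f (Icc s t)) :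
    ∫ u in s..t, |deriv f u| = |f t - f s| := by
  rcases hmono with hmono | hanti
  · rw [integral_abs_deriv_of_monotoneOn hf hst hmono, abs_of_nonneg]
    exact sub_nonneg.2 (hmono (left_mem_Icc.2 hst) (right_mem_Icc.2 hst) hst)
  · have hneg := integral_abs_deriv_of_monotoneOn hf.neg hst hanti.neg
    simp only [deriv.fun_neg, abs_neg] at hneg
    rw [hneg, abs_of_nonpos]
    · ring
    · exact sub_nonpos.2 (hanti (left_mem_Icc.2 hst) (right_mem_Icc.2 hst) hst)

lemma integral_abs_deriv_le_of_forall_monotoneOn_or_antitoneOn {f : ℝ → ℝ} (hf : ContDiff ℝ 1 f)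
    {A B : ℝ} (hAB : MapsTo f (Ici 0) (Icc A B)) {a : ℕ → ℝ} (ha₀ : a 0 = 0) (ha : Monotone a)
    {n : ℕ} (hpiece : ∀ i < n, MonotoneOn f (Icc (a i) (a (i + 1))) ∨
      AntitoneOn f (Icc (a i) (a (i + 1)))) :
    ∫ u in 0..a n, |deriv f u| ≤ n * (B - A) := by
  induction n with
  | zero => simp [ha₀]
  | succ n ih =>
    have hint : ∀ s t, IntervalIntegrable (fun u => |deriv f u|) volume s t := fun s t =>
      hf.continuous_deriv_one.abs.intervalIntegrable s t
    have ha_mem : ∀ i, a i ∈ Ici 0 := fun i => ha₀.symm.le.trans (ha i.zero_le)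
    rw [← intervalIntegral.integral_add_adjacent_intervals (hint 0 (a n)) (hint _ _),
      integral_abs_deriv_of_monotoneOn_or_antitoneOn hf (ha n.le_succ) (hpiece n n.lt_succ_self)]
    push_cast
    linarith [ih fun i hi => hpiece i (by omega),
      abs_sub_le_of_le_of_le (hAB (ha_mem (n + 1))).1 (hAB (ha_mem (n + 1))).2
        (hAB (ha_mem n)).1 (hAB (ha_mem n)).2]

lemma PiecewiseMono.integral_abs_deriv_le {f : ℝ → ℝ} {M : ℕ} (hf : PiecewiseMono f M)
    (hM : 0 < M) (hsmooth : ContDiff ℝ 1 f) {A B : ℝ} (hAB : MapsTo f (Ici 0) (Icc A B))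
    {l b : ℝ} (hl : 0 ≤ l) (hlb : l ≤ b) : ∫ u in l..b, |deriv f u| ≤ M * (B - A) := by
  obtain ⟨a, ha₀, ha, hpiece, hlast⟩ := hf
  obtain ⟨n, rfl⟩ := Nat.exists_eq_succ_of_ne_zero hM.ne'
  have hint : ∀ s t, IntervalIntegrable (fun u => |deriv f u|) volume s t := fun s t =>
    hsmooth.continuous_deriv_one.abs.intervalIntegrable s t
  have han : 0 ≤ a n := ha₀.symm.le.trans (ha n.zero_le)
  have hbn : b ≤ max b (a n) := le_max_left _ _
  have hnb : a n ≤ max b (a n) := le_max_right _ _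
  have hinit : ∫ u in 0..a n, |deriv f u| ≤ n * (B - A) :=
    integral_abs_deriv_le_of_forall_monotoneOn_or_antitoneOn hsmooth hAB ha₀ ha fun i hi =>
      hpiece i (by omega)
  have htail : ∫ u in a n..max b (a n), |deriv f u| ≤ B - A := by
    rw [integral_abs_deriv_of_monotoneOn_or_antitoneOn hsmooth hnb
      (hlast.imp (·.mono Icc_subset_Ici_self) (·.mono Icc_subset_Ici_self))]
    exact abs_sub_le_of_le_of_le (hAB (han.trans hnb)).1 (hAB (han.trans hnb)).2
      (hAB han).1 (hAB han).2
  calc ∫ u in l..b, |deriv f u| ≤ ∫ u in 0..max b (a n), |deriv f u| :=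
        intervalIntegral.integral_mono_interval hl hlb hbn (.of_forall fun u => abs_nonneg _)
          (hint _ _)
    _ = (∫ u in 0..a n, |deriv f u|) + ∫ u in a n..max b (a n), |deriv f u| :=
      (intervalIntegral.integral_add_adjacent_intervals (hint _ _) (hint _ _)).symm
    _ ≤ n * (B - A) + (B - A) := add_le_add hinit htail
    _ = (n + 1 : ℕ) * (B - A) := by push_cast; ring

end Variation

section IntegrationByParts

lemma abs_integral_mul_le {F G g : ℝ → ℝ} {A l b : ℝ} (hlb : l ≤ b)
    (hF : ∀ u ∈ Icc l b, |F u| ≤ A) (hG : ∀ u ∈ Icc l b, |G u| ≤ g u)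
    (hg : IntervalIntegrable g volume l b) :
    |∫ u in l..b, F u * G u| ≤ A * ∫ u in l..b, g u := by
  rw [← intervalIntegral.integral_const_mul, ← Real.norm_eq_abs]
  refine intervalIntegral.norm_integral_le_of_norm_le hlb (.of_forall fun u hu => ?_)
    (hg.const_mul A)
  have hu' := Ioc_subset_Icc_self hu
  rw [Real.norm_eq_abs, abs_mul]
  exact mul_le_mul (hF u hu') (hG u hu') (abs_nonneg _) ((abs_nonneg _).trans (hF u hu'))

namespace IsBesselPair

variable {ν l b : ℝ} {k p f f' : ℝ → ℝ}

lemma exists_primitive (h : IsBesselPair ν k p) :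
    ∃ I : ℝ → ℝ, ∀ u, 0 < u → HasDerivAt I (k u / u) u := by
  have hcont : ContinuousOn (fun v => k v / v) (Ioi 0) :=
    h.continuousOn_fst.div continuousOn_id fun v hv => (mem_Ioi.1 hv).ne'
  refine ⟨fun u => ∫ v in 1..u, k v / v, fun u hu => ?_⟩
  refine intervalIntegral.integral_hasDerivAt_right (hcont.mono fun v hv => ?_).intervalIntegrable
    (hcont.stronglyMeasurableAtFilter isOpen_Ioi u hu) (hcont.continuousAt (Ioi_mem_nhds hu))
  exact (lt_min one_pos hu).trans_le hv.1

lemma integral_fst_mul_div (h : IsBesselPair ν k p) (hl : 0 < l) (hlb : l ≤ b)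
    (hf : ∀ u ∈ Icc l b, HasDerivAt f (f' u) u) (hf' : IntervalIntegrable f' volume l b)
    (hfl : f l = 0) (hfb : f b = 0) :
    ∫ u in l..b, k u * ((ν ^ 2 - u ^ 2) * f u) / u = ∫ u in l..b, p u * f' u := by
  have hpos : Icc l b ⊆ Ioi 0 := fun u hu => hl.trans_le hu.1
  rw [← uIcc_of_le hlb] at hf hpos
  have hp' : ContinuousOn (fun u => (u ^ 2 - ν ^ 2) * k u / u) (uIcc l b) :=
    ((by fun_prop : Continuous fun u : ℝ => u ^ 2 - ν ^ 2).continuousOn.mul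
      (h.continuousOn_fst.mono hpos)).div continuousOn_id fun u hu => (mem_Ioi.1 (hpos hu)).ne'
  rw [intervalIntegral.integral_mul_deriv_eq_deriv_mul
      (fun u hu => h.hasDerivAt_snd u (hpos hu)) hf hp'.intervalIntegrable hf',
    hfl, hfb, mul_zero, mul_zero, sub_zero, zero_sub, ← intervalIntegral.integral_neg]
  congr 1 with u
  ring

lemma integral_snd_mul (h : IsBesselPair ν k p) (hl : 0 < l) (hlb : l ≤ b)
    (hf : ∀ u ∈ Icc l b, HasDerivAt (fun u => u * f u) (f' u) u)
    (hf' : IntervalIntegrable f' volume l b) (hfl : f l = 0) (hfb : f b = 0) :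
    ∫ u in l..b, p u * f u = -∫ u in l..b, k u * f' u := by
  have hpos : Icc l b ⊆ Ioi 0 := fun u hu => hl.trans_le hu.1
  rw [← uIcc_of_le hlb] at hf hpos
  have hk' : ContinuousOn (fun u => p u / u) (uIcc l b) :=
    (h.continuousOn_snd.mono hpos).div continuousOn_id fun u hu => (mem_Ioi.1 (hpos hu)).ne'
  rw [intervalIntegral.integral_mul_deriv_eq_deriv_mul
      (fun u hu => h.hasDerivAt_fst u (hpos hu)) hf hk'.intervalIntegrable hf',
    hfl, hfb, mul_zero, mul_zero, mul_zero, mul_zero, sub_zero, zero_sub, neg_neg]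
  refine intervalIntegral.integral_congr fun u hu => ?_
  have hu0 : u ≠ 0 := (mem_Ioi.1 (hpos hu)).ne'
  field_simp

end IsBesselPair

end IntegrationByParts

section Oscillatory

/-- The derivative of the amplitude `φ u / (ν ^ 2 - u ^ 2)` that appears when `k u / u` is
integrated in the oscillatory range `u < ν`. -/
noncomputable def amplitudeDeriv (ν : ℝ) (φ : ℝ → ℝ) (u : ℝ) : ℝ :=
  deriv φ u * (ν ^ 2 - u ^ 2)⁻¹ + 2 * u * φ u * (ν ^ 2 - u ^ 2)⁻¹ ^ 2

/-- The derivative of `u * amplitudeDeriv ν φ u`, the weight left after a second integration by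
parts. -/
noncomputable def amplitudeEulerDeriv (ν : ℝ) (φ : ℝ → ℝ) (u : ℝ) : ℝ :=
  u * deriv (deriv φ) u * (ν ^ 2 - u ^ 2)⁻¹
    + deriv φ u * ((ν ^ 2 - u ^ 2)⁻¹ + 4 * u ^ 2 * (ν ^ 2 - u ^ 2)⁻¹ ^ 2)
    + φ u * (4 * u * (ν ^ 2 - u ^ 2)⁻¹ ^ 2 + 8 * u ^ 3 * (ν ^ 2 - u ^ 2)⁻¹ ^ 3)

variable {ν l b u : ℝ} {k p φ : ℝ → ℝ}

lemma hasDerivAt_inv_sq_sub_sq (hu : ν ^ 2 - u ^ 2 ≠ 0) :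
    HasDerivAt (fun u => (ν ^ 2 - u ^ 2)⁻¹) (2 * u * (ν ^ 2 - u ^ 2)⁻¹ ^ 2) u := by
  refine ((((hasDerivAt_id u).fun_pow 2).const_sub (ν ^ 2)).fun_inv hu).congr_deriv ?_
  simp only [id]
  field_simp
  norm_num
  ring

lemma hasDerivAt_mul_inv_sq_sub_sq (hφ : DifferentiableAt ℝ φ u) (hu : ν ^ 2 - u ^ 2 ≠ 0) :
    HasDerivAt (fun u => φ u * (ν ^ 2 - u ^ 2)⁻¹) (amplitudeDeriv ν φ u) u := by
  refine (hφ.hasDerivAt.fun_mul (hasDerivAt_inv_sq_sub_sq hu)).congr_deriv ?_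
  unfold amplitudeDeriv
  ring

lemma hasDerivAt_mul_amplitudeDeriv (hφ : DifferentiableAt ℝ φ u)
    (hφ' : DifferentiableAt ℝ (deriv φ) u) (hu : ν ^ 2 - u ^ 2 ≠ 0) :
    HasDerivAt (fun u => u * amplitudeDeriv ν φ u) (amplitudeEulerDeriv ν φ u) u := by
  have hinv := hasDerivAt_inv_sq_sub_sq hu
  refine ((hasDerivAt_id u).fun_mul ((hφ'.hasDerivAt.fun_mul hinv).fun_add
    ((((hasDerivAt_id u).const_mul 2).fun_mul hφ.hasDerivAt).fun_mul
      (hinv.fun_pow 2)))).congr_deriv ?_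
  simp only [id]
  unfold amplitudeEulerDeriv
  push_cast
  ring

lemma seven_sixteenths_mul_sq_le (hu₀ : 0 ≤ u) (hu : u ≤ 3 / 4 * ν) :
    7 / 16 * ν ^ 2 ≤ ν ^ 2 - u ^ 2 := by
  have : u ^ 2 ≤ (3 / 4 * ν) ^ 2 := by gcongr
  linarith

lemma sq_sub_sq_pos (hν : 0 < ν) (hu₀ : 0 ≤ u) (hu : u ≤ 3 / 4 * ν) : 0 < ν ^ 2 - u ^ 2 :=
  lt_of_lt_of_le (by positivity) (seven_sixteenths_mul_sq_le hu₀ hu)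

lemma inv_sq_sub_sq_le (hν : 0 < ν) (hu₀ : 0 ≤ u) (hu : u ≤ 3 / 4 * ν) :
    (ν ^ 2 - u ^ 2)⁻¹ ≤ 16 / 7 / ν ^ 2 :=
  calc (ν ^ 2 - u ^ 2)⁻¹ ≤ (7 / 16 * ν ^ 2)⁻¹ :=
        inv_anti₀ (by positivity) (seven_sixteenths_mul_sq_le hu₀ hu)
    _ = 16 / 7 / ν ^ 2 := by field_simp

lemma abs_amplitudeDeriv_le (hν : 0 < ν) (hφ : φ u ∈ Icc 0 1) (hu₀ : 0 ≤ u) (hu : u ≤ 3 / 4 * ν) :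
    |amplitudeDeriv ν φ u| ≤ 8 / ν ^ 3 + 3 / ν ^ 2 * |deriv φ u| := by
  have hw₀ : 0 < (ν ^ 2 - u ^ 2)⁻¹ := inv_pos.2 (sq_sub_sq_pos hν hu₀ hu)
  have hw := inv_sq_sub_sq_le hν hu₀ hu
  obtain ⟨hφ₀, hφ₁⟩ := hφ
  unfold amplitudeDeriv
  set w := (ν ^ 2 - u ^ 2)⁻¹
  calc |deriv φ u * w + 2 * u * φ u * w ^ 2| ≤ |deriv φ u| * w + 2 * u * φ u * w ^ 2 := by
        refine (abs_add_le _ _).trans_eq ?_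
        rw [abs_mul, abs_of_pos hw₀, abs_of_nonneg (by positivity : 0 ≤ 2 * u * φ u * w ^ 2)]
    _ ≤ |deriv φ u| * (16 / 7 / ν ^ 2) + 2 * (3 / 4 * ν) * 1 * (16 / 7 / ν ^ 2) ^ 2 := by gcongr
    _ = 384 / 49 / ν ^ 3 + 16 / 7 / ν ^ 2 * |deriv φ u| := by field_simp; ring
    _ ≤ 8 / ν ^ 3 + 3 / ν ^ 2 * |deriv φ u| := by gcongr <;> norm_num

lemma abs_amplitudeEulerDeriv_le (hν : 0 < ν) (hφ : φ u ∈ Icc 0 1) (hu₀ : 0 ≤ u) (hub : u ≤ b)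
    (hb : b ≤ 3 / 4 * ν) :
    |amplitudeEulerDeriv ν φ u| ≤
      56 / ν ^ 3 + 15 / ν ^ 2 * |deriv φ u| + 3 / ν ^ 2 * (b * |deriv (deriv φ) u|) := by
  have hu := hub.trans hb
  have hb₀ := hu₀.trans hub
  have hw₀ : 0 < (ν ^ 2 - u ^ 2)⁻¹ := inv_pos.2 (sq_sub_sq_pos hν hu₀ hu)
  have hw := inv_sq_sub_sq_le hν hu₀ hu
  obtain ⟨hφ₀, hφ₁⟩ := hφ
  unfold amplitudeEulerDeriv
  set w := (ν ^ 2 - u ^ 2)⁻¹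
  calc |u * deriv (deriv φ) u * w + deriv φ u * (w + 4 * u ^ 2 * w ^ 2)
        + φ u * (4 * u * w ^ 2 + 8 * u ^ 3 * w ^ 3)|
      ≤ u * |deriv (deriv φ) u| * w + |deriv φ u| * (w + 4 * u ^ 2 * w ^ 2)
        + φ u * (4 * u * w ^ 2 + 8 * u ^ 3 * w ^ 3) := by
        refine (abs_add_three _ _ _).trans_eq ?_
        rw [abs_mul _ w, abs_mul u, abs_mul (deriv φ u), abs_of_nonneg hu₀, abs_of_pos hw₀,
          abs_of_nonneg (by positivity : 0 ≤ w + 4 * u ^ 2 * w ^ 2),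
          abs_of_nonneg (by positivity : 0 ≤ φ u * (4 * u * w ^ 2 + 8 * u ^ 3 * w ^ 3))]
    _ ≤ b * |deriv (deriv φ) u| * (16 / 7 / ν ^ 2)
        + |deriv φ u| * (16 / 7 / ν ^ 2 + 4 * (3 / 4 * ν) ^ 2 * (16 / 7 / ν ^ 2) ^ 2)
        + 1 * (4 * (3 / 4 * ν) * (16 / 7 / ν ^ 2) ^ 2
          + 8 * (3 / 4 * ν) ^ 3 * (16 / 7 / ν ^ 2) ^ 3) := by gcongr
    _ = 19200 / 343 / ν ^ 3 + 688 / 49 / ν ^ 2 * |deriv φ u|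
        + 16 / 7 / ν ^ 2 * (b * |deriv (deriv φ) u|) := by field_simp; ring
    _ ≤ 56 / ν ^ 3 + 15 / ν ^ 2 * |deriv φ u| + 3 / ν ^ 2 * (b * |deriv (deriv φ) u|) := by
      gcongr <;> norm_num

namespace IsBesselPair

lemma integral_eq_integral_amplitudeDeriv (h : IsBesselPair ν k p) (hν : 0 < ν)
    (hl : 0 < l) (hlb : l ≤ b) (hb : b ≤ 3 / 4 * ν) (hφ : ContDiff ℝ 1 φ) (hφl : φ l = 0)
    (hφb : φ b = 0) :
    ∫ u in l..b, k u * φ u / u = ∫ u in l..b, p u * amplitudeDeriv ν φ u := by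
  have hQ : ∀ u ∈ Icc l b, ν ^ 2 - u ^ 2 ≠ 0 := fun u hu =>
    (sq_sub_sq_pos hν (hl.le.trans hu.1) (hu.2.trans hb)).ne'
  have hcont : ContinuousOn (amplitudeDeriv ν φ) (uIcc l b) := by
    rw [uIcc_of_le hlb]
    unfold amplitudeDeriv
    have := hφ.continuous_deriv_one.continuousOn (s := Icc l b)
    have := hφ.continuous.continuousOn (s := Icc l b)
    fun_prop (disch := assumption)
  rw [← h.integral_fst_mul_div hl hlb (fun u hu =>
    hasDerivAt_mul_inv_sq_sub_sq (hφ.differentiable_one u) (hQ u hu)) hcont.intervalIntegrable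
    (by simp [hφl]) (by simp [hφb])]
  refine intervalIntegral.integral_congr fun u hu => ?_
  simp only [mul_left_comm _ (φ u), mul_inv_cancel₀ (hQ u (uIcc_of_le hlb ▸ hu)), mul_one]

lemma integral_eq_neg_integral_amplitudeEulerDeriv (h : IsBesselPair ν k p) (hν : 0 < ν)
    (hl : 0 < l) (hlb : l ≤ b) (hb : b ≤ 3 / 4 * ν) (hφ : ContDiff ℝ 2 φ) (hφl : φ l = 0)
    (hφb : φ b = 0) (hφ'l : deriv φ l = 0) (hφ'b : deriv φ b = 0) :
    ∫ u in l..b, k u * φ u / u = -∫ u in l..b, k u * amplitudeEulerDeriv ν φ u := by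
  have hφ₁ : ContDiff ℝ 1 φ := hφ.of_le one_le_two
  have hφ' : ContDiff ℝ 1 (deriv φ) := hφ.deriv' (n := 1)
  have hQ : ∀ u ∈ Icc l b, ν ^ 2 - u ^ 2 ≠ 0 := fun u hu =>
    (sq_sub_sq_pos hν (hl.le.trans hu.1) (hu.2.trans hb)).ne'
  have hcont : ContinuousOn (amplitudeEulerDeriv ν φ) (uIcc l b) := by
    rw [uIcc_of_le hlb]
    unfold amplitudeEulerDeriv
    have := hφ'.continuous_deriv_one.continuousOn (s := Icc l b)
    have := hφ'.continuous.continuousOn (s := Icc l b)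
    have := hφ.continuous.continuousOn (s := Icc l b)
    fun_prop (disch := assumption)
  rw [h.integral_eq_integral_amplitudeDeriv hν hl hlb hb hφ₁ hφl hφb]
  exact h.integral_snd_mul hl hlb (fun u hu => hasDerivAt_mul_amplitudeDeriv
      (hφ₁.differentiable_one u) (hφ'.differentiable_one u) (hQ u hu)) hcont.intervalIntegrable
    (by simp [amplitudeDeriv, hφl, hφ'l]) (by simp [amplitudeDeriv, hφb, hφ'b])

end IsBesselPair

end Oscillatory

section Regimes

namespace IsNormalizedBesselPair

variable {ν l b m m₂ : ℝ} {k p φ : ℝ → ℝ}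

lemma abs_integral_le_exp (h : IsNormalizedBesselPair ν k p) (hν : 1 ≤ ν) (hl : 3 / 2 * ν ≤ l)
    (hlb : l ≤ b) (hb : b ≤ 4 * l) (hφ : ∀ u, φ u ∈ Icc 0 1) :
    |∫ u in l..b, k u * φ u / u| ≤ 3600 * Real.exp (-(27 / 100 * ν)) := by
  have hl₀ : 0 < l := by linarith
  have hk : ∀ u, l ≤ u → |k u| ≤ 1200 * Real.exp (-(27 / 100 * ν)) := fun u hu =>
    (h.abs_fst_le_exp (by linarith) (hl.trans hu)).trans (by gcongr; exact h.abs_fst_self_le hν)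
  have hbound : ∀ u ∈ uIoc l b, ‖k u * φ u / u‖ ≤ 1200 * Real.exp (-(27 / 100 * ν)) / l := by
    intro u hu
    rw [uIoc_of_le hlb] at hu
    rw [Real.norm_eq_abs, abs_div, abs_mul, abs_of_pos (hl₀.trans hu.1), abs_of_nonneg (hφ u).1]
    have hkφ : |k u| * φ u ≤ 1200 * Real.exp (-(27 / 100 * ν)) :=
      (mul_le_of_le_one_right (abs_nonneg _) (hφ u).2).trans (hk u hu.1.le)
    exact div_le_div₀ (by positivity) hkφ hl₀ hu.1.le
  calc |∫ u in l..b, k u * φ u / u|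
      ≤ 1200 * Real.exp (-(27 / 100 * ν)) / l * |b - l| :=
        intervalIntegral.norm_integral_le_of_norm_le_const hbound
    _ ≤ 1200 * Real.exp (-(27 / 100 * ν)) / l * (3 * l) := by
      rw [abs_of_nonneg (sub_nonneg.2 hlb)]
      gcongr
      linarith
    _ = 3600 * Real.exp (-(27 / 100 * ν)) := by field_simp; norm_num

lemma abs_integral_le_div (h : IsNormalizedBesselPair ν k p) (hν : 1 ≤ ν) (hl : 3 / 16 * ν ≤ l)
    (hlb : l ≤ b) (hφ : ContDiff ℝ 1 φ) (hφl : φ l = 0) (hφb : φ b = 0)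
    (hvar : ∫ u in l..b, |deriv φ u| ≤ m) :
    |∫ u in l..b, k u * φ u / u| ≤ 300000 / ν * m := by
  obtain ⟨I, hI⟩ := h.exists_primitive
  have hpos : Icc l b ⊆ Ioi 0 := fun u hu => lt_of_lt_of_le (by linarith) hu.1
  have hφ' := hφ.continuous_deriv_one
  have hk : ContinuousOn (fun u => k u / u) (uIcc l b) := by
    rw [uIcc_of_le hlb]
    exact (h.continuousOn_fst.mono hpos).div continuousOn_id fun u hu => (hpos hu).ne'
  have hparts : ∫ u in l..b, k u * φ u / u = -∫ u in l..b, (I u - I ν) * deriv φ u := by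
    rw [intervalIntegral.integral_mul_deriv_eq_deriv_mul
        (fun u hu => (hI u (hpos (uIcc_of_le hlb ▸ hu))).sub_const (I ν))
        (fun u _ => (hφ.differentiable_one u).hasDerivAt) hk.intervalIntegrable
        (hφ'.intervalIntegrable _ _), hφl, hφb, mul_zero, mul_zero, sub_zero, zero_sub, neg_neg]
    congr 1 with u
    ring
  rw [hparts, abs_neg]
  refine (abs_integral_mul_le hlb (fun u hu => h.abs_primitive_sub_le hν hI (hl.trans hu.1))
    (fun u _ => le_rfl) (hφ'.abs.intervalIntegrable _ _)).trans ?_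
  gcongr

lemma abs_snd_le (h : IsNormalizedBesselPair ν k p) (hν : 0 < ν) {u : ℝ} (hu₀ : 0 < u)
    (hu : u ≤ ν) : |p u| ≤ 2 * ν ^ (1 / 2 : ℝ) := by
  rw [← Real.sqrt_eq_rpow]
  refine abs_le_of_sq_le_sq ?_ (by positivity)
  rw [mul_pow, Real.sq_sqrt hν.le]
  have hQ : 0 ≤ ν ^ 2 - u ^ 2 := sub_nonneg.2 (by gcongr)
  linarith [h.energy_le u hu₀, mul_nonneg hQ (sq_nonneg (k u))]

lemma abs_fst_le_rpow (h : IsNormalizedBesselPair ν k p) (hν : 0 < ν) {u : ℝ} (hu₀ : 0 < u)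
    (hu : u ≤ 3 / 4 * ν) : |k u| ≤ 4 * ν ^ (-1 / 2 : ℝ) := by
  have hsq : (ν ^ (-1 / 2 : ℝ)) ^ 2 = ν⁻¹ := by
    rw [← Real.rpow_mul_natCast hν.le]
    norm_num [Real.rpow_neg_one]
  refine abs_le_of_sq_le_sq ?_ (by positivity)
  rw [mul_pow, hsq, ← div_eq_mul_inv, le_div_iff₀ hν]
  have henergy : ν * (7 / 16 * (k u ^ 2 * ν)) ≤ ν * 4 :=
    calc ν * (7 / 16 * (k u ^ 2 * ν)) = 7 / 16 * ν ^ 2 * k u ^ 2 := by ring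
      _ ≤ (ν ^ 2 - u ^ 2) * k u ^ 2 := by
        gcongr
        exact seven_sixteenths_mul_sq_le hu₀.le hu
      _ ≤ ν * 4 := by linarith [h.energy_le u hu₀, sq_nonneg (p u)]
  linarith [le_of_mul_le_mul_left henergy hν]

lemma abs_integral_le_rpow_neg_three_halves (h : IsNormalizedBesselPair ν k p) (hν : 0 < ν)
    (hl : 0 < l) (hlb : l ≤ b) (hb : b ≤ 3 / 4 * ν) (hφ : ContDiff ℝ 1 φ)
    (hφ_mem : ∀ u, φ u ∈ Icc 0 1) (hφl : φ l = 0) (hφb : φ b = 0)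
    (hvar : ∫ u in l..b, |deriv φ u| ≤ m) :
    |∫ u in l..b, k u * φ u / u| ≤ 6 * (2 + m) * ν ^ (-3 / 2 : ℝ) := by
  have hφ' : Continuous fun u => |deriv φ u| := hφ.continuous_deriv_one.abs
  rw [h.integral_eq_integral_amplitudeDeriv hν hl hlb hb hφ hφl hφb]
  calc |∫ u in l..b, p u * amplitudeDeriv ν φ u|
      ≤ 2 * ν ^ (1 / 2 : ℝ) * ∫ u in l..b, (8 / ν ^ 3 + 3 / ν ^ 2 * |deriv φ u|) :=
        abs_integral_mul_le hlb
          (fun u hu => h.abs_snd_le hν (hl.trans_le hu.1) (by linarith [hu.2]))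
          (fun u hu => abs_amplitudeDeriv_le hν (hφ_mem u) (hl.le.trans hu.1) (hu.2.trans hb))
          (Continuous.intervalIntegrable (by fun_prop) _ _)
    _ = 2 * ν ^ (1 / 2 : ℝ) * ((b - l) * (8 / ν ^ 3)
          + 3 / ν ^ 2 * ∫ u in l..b, |deriv φ u|) := by
      rw [intervalIntegral.integral_add (Continuous.intervalIntegrable (by fun_prop) _ _)
        (Continuous.intervalIntegrable (by fun_prop) _ _), intervalIntegral.integral_const,
        intervalIntegral.integral_const_mul, smul_eq_mul]
    _ ≤ 2 * ν ^ (1 / 2 : ℝ) * (3 / 4 * ν * (8 / ν ^ 3) + 3 / ν ^ 2 * m) := by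
      gcongr
      linarith
    _ = 6 * (2 + m) * (ν ^ (1 / 2 : ℝ) / ν ^ 2) := by field_simp; ring
    _ = 6 * (2 + m) * ν ^ (-3 / 2 : ℝ) := by
      rw [← Real.rpow_sub_natCast hν.ne']
      norm_num

lemma abs_integral_le_rpow_neg_five_halves (h : IsNormalizedBesselPair ν k p) (hν : 0 < ν)
    (hl : 0 < l) (hlb : l ≤ b) (hb : b ≤ 3 / 4 * ν) (hφ : ContDiff ℝ 2 φ)
    (hφ_mem : ∀ u, φ u ∈ Icc 0 1) (hφl : φ l = 0) (hφb : φ b = 0) (hφ'l : deriv φ l = 0)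
    (hφ'b : deriv φ b = 0) (hvar : ∫ u in l..b, |deriv φ u| ≤ m)
    (hvar' : b * ∫ u in l..b, |deriv (deriv φ) u| ≤ m₂) :
    |∫ u in l..b, k u * φ u / u| ≤ 12 * (14 + 5 * m + m₂) * ν ^ (-5 / 2 : ℝ) := by
  have hφ'_smooth : ContDiff ℝ 1 (deriv φ) := hφ.deriv' (n := 1)
  have hφ' : Continuous fun u => |deriv φ u| := hφ'_smooth.continuous.abs
  have hφ'' : Continuous fun u => |deriv (deriv φ) u| := hφ'_smooth.continuous_deriv_one.abs
  rw [h.integral_eq_neg_integral_amplitudeEulerDeriv hν hl hlb hb hφ hφl hφb hφ'l hφ'b, abs_neg]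
  calc |∫ u in l..b, k u * amplitudeEulerDeriv ν φ u|
      ≤ 4 * ν ^ (-1 / 2 : ℝ) * ∫ u in l..b, (56 / ν ^ 3 + 15 / ν ^ 2 * |deriv φ u|
          + 3 / ν ^ 2 * (b * |deriv (deriv φ) u|)) :=
        abs_integral_mul_le hlb
          (fun u hu => h.abs_fst_le_rpow hν (hl.trans_le hu.1) (hu.2.trans hb))
          (fun u hu => abs_amplitudeEulerDeriv_le hν (hφ_mem u) (hl.le.trans hu.1) hu.2 hb)
          (Continuous.intervalIntegrable (by fun_prop) _ _)
    _ = 4 * ν ^ (-1 / 2 : ℝ) * ((b - l) * (56 / ν ^ 3) + 15 / ν ^ 2 * (∫ u in l..b, |deriv φ u|)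
          + 3 / ν ^ 2 * (b * ∫ u in l..b, |deriv (deriv φ) u|)) := by
      rw [intervalIntegral.integral_add (Continuous.intervalIntegrable (by fun_prop) _ _)
          (Continuous.intervalIntegrable (by fun_prop) _ _),
        intervalIntegral.integral_add (Continuous.intervalIntegrable (by fun_prop) _ _)
          (Continuous.intervalIntegrable (by fun_prop) _ _),
        intervalIntegral.integral_const, intervalIntegral.integral_const_mul,
        intervalIntegral.integral_const_mul, intervalIntegral.integral_const_mul, smul_eq_mul]
    _ ≤ 4 * ν ^ (-1 / 2 : ℝ) * (3 / 4 * ν * (56 / ν ^ 3) + 15 / ν ^ 2 * m + 3 / ν ^ 2 * m₂) := by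
      gcongr
      linarith
    _ = 12 * (14 + 5 * m + m₂) * (ν ^ (-1 / 2 : ℝ) / ν ^ 2) := by field_simp; ring
    _ = 12 * (14 + 5 * m + m₂) * ν ^ (-5 / 2 : ℝ) := by
      rw [← Real.rpow_sub_natCast hν.ne']
      norm_num

end IsNormalizedBesselPair

end Regimes

section TestFunction

lemma phiCheck_eq_intervalIntegral {φ : ℝ → ℝ} {l b : ℝ} (hl : 0 < l) (hlb : l ≤ b)
    (hφl : ∀ t ≤ l, φ t = 0) (hφb : ∀ t, b ≤ t → φ t = 0) (r : ℝ) :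
    phiCheck φ r = ∫ u in l..b, Real.cosh (Real.pi * r) * KBessel (2 * r) u * φ u / u := by
  have hzero : ∀ u ∈ Ioi 0 \ Ioc l b, KBessel (2 * r) u * φ u / u = 0 := by
    rintro u ⟨-, hu⟩
    have hφu : φ u = 0 := by
      rcases le_or_gt u l with h | h
      · exact hφl u h
      · exact hφb u (le_of_not_ge fun hub => hu ⟨h, hub⟩)
    rw [hφu, mul_zero, zero_div]
  rw [phiCheck, setIntegral_eq_of_subset_of_forall_sdiff_eq_zero measurableSet_Ioi
      (fun u hu => hl.trans hu.1) hzero, ← intervalIntegral.integral_of_le hlb,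
    ← intervalIntegral.integral_const_mul]
  congr 1 with u
  ring

namespace IsAdmissible

variable {a x T C₀ : ℝ} {M : ℕ} {φ : ℝ → ℝ}

lemma contDiff (h : IsAdmissible a x T C₀ M φ) {n : ℕ} : ContDiff ℝ n φ :=
  contDiff_infty.1 h.1 n

lemma mem_Icc (h : IsAdmissible a x T C₀ M φ) (t : ℝ) : φ t ∈ Icc 0 1 := h.2.1 t

lemma eq_zero_of_le (h : IsAdmissible a x T C₀ M φ) (ha : 0 < a) (hT : 0 < T) (hTx : T ≤ x / 3)
    {t : ℝ} (ht : t ≤ 3 / 8 * (a / x)) : φ t = 0 := by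
  have hx : 0 < x := by linarith
  refine h.2.2.2.1 t (ht.trans ?_)
  calc 3 / 8 * (a / x) = a / (8 / 3 * x) := by field_simp
    _ ≤ a / (2 * x + 2 * T) := by gcongr; linarith

lemma eq_zero_of_ge (h : IsAdmissible a x T C₀ M φ) (ha : 0 < a) (hT : 0 < T) (hTx : T ≤ x / 3)
    {t : ℝ} (ht : 3 / 2 * (a / x) ≤ t) : φ t = 0 := by
  have hx : 0 < x := by linarith
  refine h.2.2.2.2.1 t (le_trans ?_ ht)
  calc a / (x - T) ≤ a / (2 / 3 * x) := by gcongr; linarith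
    _ = 3 / 2 * (a / x) := by field_simp

lemma deriv_eq_zero (h : IsAdmissible a x T C₀ M φ) {t : ℝ} (ht : φ t = 0) : deriv φ t = 0 :=
  IsLocalMin.deriv_eq_zero (.of_forall fun s => ht.trans_le (h.mem_Icc s).1)

lemma integral_abs_deriv_le (h : IsAdmissible a x T C₀ M φ) (hM : 0 < M) {l b : ℝ} (hl : 0 ≤ l)
    (hlb : l ≤ b) : ∫ u in l..b, |deriv φ u| ≤ M := by
  obtain ⟨-, -, -, -, -, -, hmono, -⟩ := id h
  simpa using hmono.integral_abs_deriv_le hM h.contDiff (fun t _ => h.mem_Icc t) hl hlb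

lemma mul_integral_abs_deriv_deriv_le (h : IsAdmissible a x T C₀ M φ) (ha : 0 < a) (hT : 0 < T)
    (hTx : T ≤ x / 3) (hM : 0 < M) :
    3 / 2 * (a / x) * ∫ u in 3 / 8 * (a / x)..3 / 2 * (a / x), |deriv (deriv φ) u| ≤
      3 * C₀ * M * (x / T) := by
  have hx : 0 < x := by linarith
  obtain ⟨-, -, -, -, -, hderiv, -, hmono⟩ := id h
  have hvar := hmono.integral_abs_deriv_le hM (h.contDiff (n := 2)).deriv'
    (fun t ht => abs_le.1 (hderiv t ht)) (by positivity : 0 ≤ 3 / 8 * (a / x))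
    (by gcongr; norm_num : 3 / 8 * (a / x) ≤ 3 / 2 * (a / x))
  calc 3 / 2 * (a / x) * ∫ u in 3 / 8 * (a / x)..3 / 2 * (a / x), |deriv (deriv φ) u|
      ≤ 3 / 2 * (a / x) * (M * (C₀ * x ^ 2 / (a * T) - -(C₀ * x ^ 2 / (a * T)))) := by gcongr
    _ = 3 * C₀ * M * (x / T) := by field_simp; ring

lemma phiCheck_eq_integral (h : IsAdmissible a x T C₀ M φ) (ha : 0 < a) (hT : 0 < T)
    (hTx : T ≤ x / 3) (r : ℝ) :
    phiCheck φ r = ∫ u in 3 / 8 * (a / x)..3 / 2 * (a / x),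
      Real.cosh (Real.pi * r) * KBessel (2 * r) u * φ u / u := by
  have hX : 0 < a / x := div_pos ha (by linarith)
  exact phiCheck_eq_intervalIntegral (by positivity) (by gcongr; norm_num)
    (fun t ht => h.eq_zero_of_le ha hT hTx ht) (fun t ht => h.eq_zero_of_ge ha hT hTx ht) r

end IsAdmissible

end TestFunction

section Transform

lemma exp_neg_le_rpow_mul_exp {r : ℝ} (hr : 1 ≤ r) :
    Real.exp (-(27 / 100 * (2 * r))) ≤ 1250 * r ^ (-(3 : ℝ) / 2) * Real.exp (-r / 2) := by
  have hr₀ : 0 < r := by linarith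
  have hquad : r ^ 2 / 1250 ≤ Real.exp (r / 25) := by
    have := Real.quadratic_le_exp_of_nonneg (by positivity : 0 ≤ r / 25)
    linarith
  have hexp : Real.exp (-(r / 25)) ≤ 1250 * r ^ (-(3 : ℝ) / 2) :=
    calc Real.exp (-(r / 25)) = (Real.exp (r / 25))⁻¹ := Real.exp_neg _
      _ ≤ (r ^ 2 / 1250)⁻¹ := inv_anti₀ (by positivity) hquad
      _ = 1250 * r ^ (-(2 : ℕ) : ℝ) := by
        rw [Real.rpow_neg hr₀.le, Real.rpow_natCast]
        field_simp
      _ ≤ 1250 * r ^ (-(3 : ℝ) / 2) := by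
        gcongr
        norm_num
  calc Real.exp (-(27 / 100 * (2 * r))) = Real.exp (-(r / 25)) * Real.exp (-r / 2) := by
        rw [← Real.exp_add]
        ring_nf
    _ ≤ 1250 * r ^ (-(3 : ℝ) / 2) * Real.exp (-r / 2) := by gcongr

namespace IsAdmissible

variable {a x T C₀ : ℝ} {M : ℕ} {φ : ℝ → ℝ} {r : ℝ}

lemma abs_phiCheck_le_exp (h : IsAdmissible a x T C₀ M φ) (ha : 0 < a) (hT : 0 < T)
    (hTx : T ≤ x / 3) (hr : 1 ≤ r) (hrX : r ≤ a / x / 8) :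
    |phiCheck φ r| ≤ 4500000 * r ^ (-(3 : ℝ) / 2) * Real.exp (-r / 2) := by
  rw [h.phiCheck_eq_integral ha hT hTx]
  calc _ ≤ 3600 * Real.exp (-(27 / 100 * (2 * r))) :=
        (isNormalizedBesselPair_cosh_mul_KBessel hr).abs_integral_le_exp (by linarith)
          (by linarith) (by linarith) (by linarith) h.mem_Icc
    _ ≤ 3600 * (1250 * r ^ (-(3 : ℝ) / 2) * Real.exp (-r / 2)) := by
      gcongr
      exact exp_neg_le_rpow_mul_exp hr
    _ = 4500000 * r ^ (-(3 : ℝ) / 2) * Real.exp (-r / 2) := by ring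

lemma abs_phiCheck_le_inv (h : IsAdmissible a x T C₀ M φ) (ha : 0 < a) (hT : 0 < T)
    (hTx : T ≤ x / 3) (hM : 0 < M) (hr : 1 ≤ r) (hrX : r ≤ a / x) :
    |phiCheck φ r| ≤ 150000 * M * r⁻¹ := by
  rw [h.phiCheck_eq_integral ha hT hTx]
  calc _ ≤ 300000 / (2 * r) * M :=
        (isNormalizedBesselPair_cosh_mul_KBessel hr).abs_integral_le_div (by linarith)
          (by linarith) (by linarith) h.contDiff (h.eq_zero_of_le ha hT hTx le_rfl)
          (h.eq_zero_of_ge ha hT hTx le_rfl)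
          (h.integral_abs_deriv_le hM (by linarith) (by linarith))
    _ = 150000 * M * r⁻¹ := by ring

lemma abs_phiCheck_le_rpow_neg_three_halves (h : IsAdmissible a x T C₀ M φ) (ha : 0 < a)
    (hT : 0 < T) (hTx : T ≤ x / 3) (hM : 0 < M) (hr : 1 ≤ r) (hXr : a / x ≤ r) :
    |phiCheck φ r| ≤ 6 * (2 + M) * r ^ (-(3 : ℝ) / 2) := by
  have hX : 0 < a / x := div_pos ha (by linarith)
  rw [h.phiCheck_eq_integral ha hT hTx]
  calc _ ≤ 6 * (2 + M) * (2 * r) ^ (-(3 : ℝ) / 2) :=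
        (isNormalizedBesselPair_cosh_mul_KBessel hr).abs_integral_le_rpow_neg_three_halves
          (by linarith) (by linarith) (by linarith) (by linarith) h.contDiff h.mem_Icc
          (h.eq_zero_of_le ha hT hTx le_rfl) (h.eq_zero_of_ge ha hT hTx le_rfl)
          (h.integral_abs_deriv_le hM (by linarith) (by linarith))
    _ ≤ 6 * (2 + M) * r ^ (-(3 : ℝ) / 2) := by
      gcongr 6 * (2 + (M : ℝ)) * ?_
      exact Real.rpow_le_rpow_of_nonpos (by linarith) (by linarith) (by norm_num)

lemma abs_phiCheck_le_rpow_neg_five_halves (h : IsAdmissible a x T C₀ M φ) (ha : 0 < a)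
    (hT : 0 < T) (hTx : T ≤ x / 3) (hM : 0 < M) (hr : 1 ≤ r) (hXr : a / x ≤ r) :
    |phiCheck φ r| ≤ 12 * (14 + 5 * M + 3 * C₀ * M) * (r ^ (-(5 : ℝ) / 2) * x / T) := by
  have hX : 0 < a / x := div_pos ha (by linarith)
  have hxT : 1 ≤ x / T := by rw [one_le_div hT]; linarith
  have hl := h.eq_zero_of_le ha hT hTx le_rfl
  have hb := h.eq_zero_of_ge ha hT hTx le_rfl
  have hvar' := h.mul_integral_abs_deriv_deriv_le ha hT hTx hM
  have hnonneg : 0 ≤ 3 * C₀ * M * (x / T) := by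
    refine le_trans (mul_nonneg (by positivity) (intervalIntegral.integral_nonneg ?_ ?_)) hvar'
    · gcongr
      norm_num
    · exact fun u _ => abs_nonneg _
  rw [h.phiCheck_eq_integral ha hT hTx]
  calc _ ≤ 12 * (14 + 5 * M + 3 * C₀ * M * (x / T)) * (2 * r) ^ (-(5 : ℝ) / 2) :=
        (isNormalizedBesselPair_cosh_mul_KBessel hr).abs_integral_le_rpow_neg_five_halves
          (by linarith) (by linarith) (by linarith) (by linarith) h.contDiff h.mem_Icc hl hb
          (h.deriv_eq_zero hl) (h.deriv_eq_zero hb)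
          (h.integral_abs_deriv_le hM (by linarith) (by linarith)) hvar'
    _ ≤ 12 * ((14 + 5 * M) * (x / T) + 3 * C₀ * M * (x / T)) * r ^ (-(5 : ℝ) / 2) := by
      gcongr 12 * (?_ + _) * ?_
      · exact le_mul_of_one_le_right (by positivity) hxT
      · exact Real.rpow_le_rpow_of_nonpos (by linarith) (by linarith) (by norm_num)
    _ = 12 * (14 + 5 * M + 3 * C₀ * M) * (r ^ (-(5 : ℝ) / 2) * x / T) := by ring

end IsAdmissible

end Transform

theorem statement12_general :
    ∀ C₀ : ℝ, 0 < C₀ → ∀ M : ℕ, 0 < M →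
      ∃ C : ℝ, 0 < C ∧
        ∀ a x T : ℝ, 0 < a → 0 < T → T ≤ x / 3 →
          ∀ φ : ℝ → ℝ, IsAdmissible a x T C₀ M φ →
            (∀ r : ℝ, 1 ≤ r → r ≤ a / (8 * x) →
              |phiCheck φ r| ≤ C * r ^ (-(3:ℝ)/2) * Real.exp (-r / 2)) ∧
            (∀ r : ℝ, 1 ≤ r → r ≤ a / x →
              |phiCheck φ r| ≤ C * r⁻¹) ∧
            (∀ r : ℝ, max (a / x) 1 ≤ r →
              |phiCheck φ r| ≤ C * min (r ^ (-(3:ℝ)/2)) (r ^ (-(5:ℝ)/2) * x / T)) := by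
  intro C₀ hC₀ M hM
  have hC₀M : 0 < C₀ * M := by positivity
  refine ⟨4500000 + 150000 * M + 36 * C₀ * M, by positivity, fun a x T ha hT hTx φ h => ?_⟩
  have hx : 0 < x := by linarith
  refine ⟨fun r hr hrX => ?_, fun r hr hrX => ?_, fun r hr => ?_⟩
  · rw [mul_comm 8 x, ← div_div] at hrX
    refine (h.abs_phiCheck_le_exp ha hT hTx hr hrX).trans ?_
    gcongr
    linarith
  · refine (h.abs_phiCheck_le_inv ha hT hTx hM hr hrX).trans ?_
    gcongr
    linarith
  · obtain ⟨hXr, hr₁⟩ := max_le_iff.1 hr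
    rw [mul_min_of_nonneg _ _ (by positivity)]
    refine le_min ((h.abs_phiCheck_le_rpow_neg_three_halves ha hT hTx hM hr₁ hXr).trans ?_)
      ((h.abs_phiCheck_le_rpow_neg_five_halves ha hT hTx hM hr₁ hXr).trans ?_)
    all_goals gcongr; linarith

theorem statement12 :
    ∀ δ : ℝ, 0 < δ → δ < 1/2 → ∀ c₁ c₂ C₀ : ℝ, 0 < c₁ → 0 < c₂ → 0 < C₀ →
      ∀ M : ℕ, 0 < M →
        ∃ C : ℝ, 0 < C ∧
          ∀ a x T : ℝ, 0 < a → 0 < x → 0 < T → T ≤ x / 3 →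
            c₁ * x ^ (1 - δ) ≤ T → T ≤ c₂ * x ^ (1 - δ) →
            ∀ φ : ℝ → ℝ, IsAdmissible a x T C₀ M φ →
              (∀ r : ℝ, 1 ≤ r → r ≤ a / (8 * x) →
                |phiCheck φ r| ≤ C * r ^ (-(3:ℝ)/2) * Real.exp (-r / 2)) ∧
              (∀ r : ℝ, max (a / (8 * x)) 1 ≤ r → r ≤ a / x →
                |phiCheck φ r| ≤ C * r⁻¹) ∧
              (∀ r : ℝ, max (a / x) 1 ≤ r →
                |phiCheck φ r| ≤ C * min (r ^ (-(3:ℝ)/2)) (r ^ (-(5:ℝ)/2) * x / T)) := by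
  intro _ _ _ _ _ C₀ _ _ hC₀ M hM
  obtain ⟨C, hC, hbounds⟩ := statement12_general C₀ hC₀ M hM
  refine ⟨C, hC, fun a x T ha _ hT hTx _ _ φ h => ?_⟩
  obtain ⟨hexp, hinv, hmin⟩ := hbounds a x T ha hT hTx φ h
  exact ⟨hexp, fun r hr => hinv r (le_of_max_le_right hr), hmin⟩
end
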